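/- arXiv:1605.08204 — 2 statements merged into one kernel-verified Lean document; each statement's English description precedes it below -/
import Mathlib

section
/- Let D be a domain in ℂ and let P be a prime ideal in H(D). Then P is not maximal if and only if o(f) = ∞ for every f ∈ P, where o(f) := sup_{ζ ∈ Z_D(f)} ord(f,ζ) for f ≠ 0 and o(0) := ∞. -/
set_option synthInstance.maxHeartbeats 400000
set_option maxHeartbeats 800000

/-- The Krull intersection of an ideal `I`: the intersection `⋂_{n=1}^∞ Iⁿ`. -/
def ki {R : Type*} [CommRing R] (I : Ideal R) : Ideal R :=
  ⨅ (n : ℕ) (_ : 1 ≤ n), I ^ n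

/-- The ring `H(D)` of holomorphic functions on a set `D ⊆ ℂ`, realized as the subalgebra of
`D → ℂ` (with pointwise operations) of functions admitting a holomorphic (complex
differentiable) extension to (an ambient function on) `D`. -/
def Hol (D : Set ℂ) : Subalgebra ℂ (D → ℂ) where
  carrier := {f | ∃ F : ℂ → ℂ, DifferentiableOn ℂ F D ∧ ∀ z : D, F z = f z}
  add_mem' := by
    rintro f g ⟨F, hF, hFf⟩ ⟨G, hG, hGg⟩
    exact ⟨F + G, hF.add hG, fun z => by simp [hFf z, hGg z]⟩
  mul_mem' := by
    rintro f g ⟨F, hF, hFf⟩ ⟨G, hG, hGg⟩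
    exact ⟨F * G, hF.mul hG, fun z => by simp [hFf z, hGg z]⟩
  algebraMap_mem' := fun c => ⟨fun _ => c, differentiableOn_const c, fun _ => rfl⟩

/-- The zero set `Z_D(f) = {z ∈ D : f(z) = 0}` of `f ∈ H(D)`. -/
def ZD {D : Set ℂ} (f : Hol D) : Set D := {z | (f : D → ℂ) z = 0}

/-- `ordGE f ζ n` says that the order (multiplicity) of `ζ` as a zero of `f ∈ H(D)` is at
least `n`, expressed by the (equivalent, for `D` open) divisibility condition that
`(z - ζ)^n` divides `f` in `H(D)`. -/
def ordGE {D : Set ℂ} (f : Hol D) (ζ : D) (n : ℕ) : Prop :=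
  ∃ g : Hol D, ∀ z : D, (f : D → ℂ) z = ((z : ℂ) - (ζ : ℂ)) ^ n * (g : D → ℂ) z

/-- `oInf f` says `o(f) = ∞`, where `o(f) := sup_{ζ ∈ Z_D(f)} ord(f,ζ)` for `f ≠ 0` and
`o(0) := ∞`: either `f = 0`, or for every `n` there is a zero of `f` of order at least `n`. -/
def oInf {D : Set ℂ} (f : Hol D) : Prop :=
  f = 0 ∨ ∀ n : ℕ, ∃ ζ ∈ ZD f, ordGE f ζ n

/-!
Let `f ∈ P` have zeros of bounded order and write `f = r * q`, where `r` has the same zeros as `f`,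
all of them simple. As `P` is prime it contains `r` or `q`, and the zeros of `q` have smaller order,
so by induction `P` contains an `h` with only simple zeros. For `g ∉ P` split `h = a * b`, where `a`
carries the zeros that `h` shares with `g`. Then `a ∣ g` gives `a ∉ P`, hence `b ∈ P`. As `b` has
simple zeros and none in common with `g`, interpolating `1 / g` on the zeros of `b` shows that `b`
and `g` generate the unit ideal. So `P` is maximal.

Conversely let `P` be maximal, take `p ∈ P` vanishing identically near no point, and let `r` have
the same zeros as `p`, all of them simple. If `r ∉ P`, some `q ∈ P` is `1` modulo `r`, so that `p`
and `q` have no common zero. By Sard's theorem for `-q / p`, almost every `c` makes all zeros of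
`q + c • p ∈ P` simple.

Functions with prescribed zeros (Weierstrass) or values are products or series over the prescribed
points, the term at a point being made small on the compact sets from which the point can be pushed
off without creating zeros.
-/

open Filter Set Topology

section Analytic

lemma exists_analyticOnNhd_eqOn_mul {𝕜 : Type*} [NontriviallyNormedField 𝕜] {D : Set 𝕜}
    {F H : 𝕜 → 𝕜} (hF : AnalyticOnNhd 𝕜 F D) (hH : AnalyticOnNhd 𝕜 H D)
    (hne : ∀ z ∈ D, analyticOrderAt H z ≠ ⊤)
    (hle : ∀ z ∈ D, analyticOrderAt H z ≤ analyticOrderAt F z) :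
    ∃ G, AnalyticOnNhd 𝕜 G D ∧ EqOn F (H * G) D := by
  have hmer : MeromorphicOn (F / H) D := hF.meromorphicOn.div hH.meromorphicOn
  have hG : AnalyticOnNhd 𝕜 (toMeromorphicNFOn (F / H) D) D := fun z hz => by
    rw [← (meromorphicNFOn_toMeromorphicNFOn (F / H) D
      hz).meromorphicOrderAt_nonneg_iff_analyticAt, meromorphicOrderAt_toMeromorphicNFOn hmer hz,
      meromorphicOrderAt_div (hF z hz).meromorphicAt (hH z hz).meromorphicAt,
      (hF z hz).meromorphicOrderAt_eq, (hH z hz).meromorphicOrderAt_eq]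
    obtain ⟨n, hn⟩ := ENat.ne_top_iff_exists.1 (hne z hz)
    have hle := hle z hz
    rw [← hn] at hle ⊢
    cases h : analyticOrderAt F z with
    | top => simp
    | coe m =>
      rw [h] at hle
      simp only [ENat.map_natCast]
      norm_cast at hle ⊢
      lia
  refine ⟨_, hG, fun z hz => ?_⟩
  have hnear : ∀ᶠ w in 𝓝[≠] z, H w ≠ 0 :=
    (hH z hz).eventually_eq_zero_or_eventually_ne_zero.resolve_left
      fun h => hne z hz (analyticOrderAt_eq_top.2 h)
  have hmul : F =ᶠ[𝓝[≠] z] H * toMeromorphicNFOn (F / H) D := by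
    filter_upwards [hnear, hmer.toMeromorphicNFOn_eq_self_on_nhdsNE hz] with w hw hGw
    simp only [Pi.mul_apply, hGw, Pi.div_apply]
    field_simp
  exact (((hF z hz).frequently_eq_iff_eventually_eq ((hH z hz).mul (hG z hz))).1
    hmul.frequently).self_of_nhds

lemma countable_inter_of_compl_mem_codiscreteWithin {X : Type*} [TopologicalSpace X]
    [SecondCountableTopology X] {S D : Set X} (hS : Sᶜ ∈ codiscreteWithin D) :
    (S ∩ D).Countable := by
  have := (isDiscrete_of_codiscreteWithin hS).to_subtype
  exact (TopologicalSpace.separableSpace_iff_countable).1 inferInstance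

lemma finite_inter_of_compl_mem_codiscreteWithin {X : Type*} [TopologicalSpace X]
    {S D K : Set X} (hS : Sᶜ ∈ codiscreteWithin D) (hKD : K ⊆ D) (hK : IsCompact K) :
    (S ∩ K).Finite := by
  simpa only [sdiff_compl, inter_comm] using
    hK.finite_sdiff_of_mem_codiscreteWithin (codiscreteWithin_mono hKD hS)

end Analytic

section NormalConvergence

/-- Normal convergence of the series `∑ i, f i` on the compact subsets of `D`. Finitely many terms
are exempt from the bound on each compact set, so that they need not be continuous. -/
def NormallySummableOn {ι X E : Type*} [TopologicalSpace X] [Norm E] (f : ι → X → E)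
    (D : Set X) : Prop :=
  ∀ K ⊆ D, IsCompact K → ∃ u : ι → ℝ, Summable u ∧ ∀ᶠ i in cofinite, ∀ z ∈ K, ‖f i z‖ ≤ u i

namespace NormallySummableOn

section Basic

variable {ι X E : Type*} [TopologicalSpace X] [NormedAddCommGroup E] {f : ι → X → E} {D : Set X}

lemma summable_norm (hf : NormallySummableOn f D) {z : X} (hz : z ∈ D) :
    Summable fun i => ‖f i z‖ := by
  obtain ⟨u, hu, hle⟩ := hf {z} (singleton_subset_iff.2 hz) isCompact_singleton
  refine .of_norm_bounded_eventually hu (hle.mono fun i hi => ?_)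
  simpa only [norm_norm] using hi z rfl

lemma update_zero [DecidableEq ι] (hf : NormallySummableOn f D) (s : ι) :
    NormallySummableOn (Function.update f s 0) D := fun K hKD hK => by
  obtain ⟨u, hu, hle⟩ := hf K hKD hK
  refine ⟨u, hu, ?_⟩
  filter_upwards [hle, (finite_singleton s).compl_mem_cofinite] with i hi his
  rwa [Function.update_of_ne his]

end Basic

section Holomorphic

variable {ι : Type*} {f : ι → ℂ → ℂ} {D : Set ℂ}

lemma analyticOnNhd_tsum (hD : IsOpen D) (hf : NormallySummableOn f D)
    (hfD : ∀ i, AnalyticOnNhd ℂ (f i) D) : AnalyticOnNhd ℂ (fun z => ∑' i, f i z) D := by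
  have hunif : TendstoLocallyUniformlyOn (fun (t : Finset ι) z => ∑ i ∈ t, f i z)
      (fun z => ∑' i, f i z) atTop D :=
    (tendstoLocallyUniformlyOn_iff_forall_isCompact hD).2 fun K hKD hK => by
      obtain ⟨u, hu, hle⟩ := hf K hKD hK
      exact tendstoUniformlyOn_tsum_of_cofinite_eventually hu hle
  exact (hunif.differentiableOn (.of_forall fun t => .fun_sum fun i _ =>
    (hfD i).differentiableOn) hD).analyticOnNhd hD

lemma analyticOnNhd_tprod_one_add (hD : IsOpen D) (hf : NormallySummableOn f D)
    (hfD : ∀ i, AnalyticOnNhd ℂ (f i) D) :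
    AnalyticOnNhd ℂ (fun z => ∏' i, (1 + f i z)) D := by
  have hunif : HasProdLocallyUniformlyOn (fun i z => 1 + f i z) (fun z => ∏' i, (1 + f i z)) D :=
    hasProdLocallyUniformlyOn_of_forall_compact hD fun K hKD hK => by
      obtain ⟨u, hu, hle⟩ := hf K hKD hK
      exact hu.hasProdUniformlyOn_one_add hK hle fun i => ((hfD i).mono hKD).continuousOn
  exact ((hasProdLocallyUniformlyOn_iff_tendstoLocallyUniformlyOn.1 hunif).differentiableOn
    (.of_forall fun t => .fun_finsetProd fun i _ =>
      ((hfD i).differentiableOn.const_add 1)) hD).analyticOnNhd hD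

lemma tprod_one_add_eq_mul_tprod_update [DecidableEq ι] (hf : NormallySummableOn f D) (s : ι)
    {z : ℂ} (hz : z ∈ D) :
    ∏' i, (1 + f i z) = (1 + f s z) * ∏' i, (1 + Function.update f s 0 i z) := by
  have hupdate : (fun i => 1 + Function.update f s 0 i z)
      = Function.update (fun i => 1 + f i z) s 1 := by
    ext i
    rcases eq_or_ne i s with rfl | his
    · simp
    · simp [his]
  have hmult := multipliable_one_add_of_summable ((hf.update_zero s).summable_norm hz)
  rw [hupdate] at hmult ⊢
  rw [hmult.tprod_eq_mul_tprod_ite' s]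
  exact congrArg _ (tprod_congr fun i => (Function.update_apply (fun i => 1 + f i z) s 1 i).symm)

lemma analyticOrderAt_tprod_one_add (hD : IsOpen D) (hf : NormallySummableOn f D)
    (hfD : ∀ i, AnalyticOnNhd ℂ (f i) D) (s : ι) {z : ℂ} (hz : z ∈ D)
    (hne : ∀ i ≠ s, 1 + f i z ≠ 0) :
    analyticOrderAt (fun w => ∏' i, (1 + f i w)) z = analyticOrderAt (fun w => 1 + f s w) z := by
  classical
  have hupdateD : ∀ i, AnalyticOnNhd ℂ (Function.update f s 0 i) D := fun i => by
    rcases eq_or_ne i s with rfl | his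
    · rw [Function.update_self]
      exact analyticOnNhd_const
    · rw [Function.update_of_ne his]
      exact hfD i
  have hfactor : AnalyticAt ℂ (fun w => 1 + f s w) z := analyticAt_const.add (hfD s z hz)
  have hrest := (hf.update_zero s).analyticOnNhd_tprod_one_add hD hupdateD z hz
  have hrest_ne : ∏' i, (1 + Function.update f s 0 i z) ≠ 0 := by
    refine tprod_one_add_ne_zero_of_summable (fun i => ?_) ((hf.update_zero s).summable_norm hz)
    rcases eq_or_ne i s with rfl | his
    · simp
    · simpa [his] using hne i his
  have hsplit : (fun w => ∏' i, (1 + f i w))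
      =ᶠ[𝓝 z] (fun w => 1 + f s w) * fun w => ∏' i, (1 + Function.update f s 0 i w) := by
    filter_upwards [hD.mem_nhds hz] with w hw
    exact hf.tprod_one_add_eq_mul_tprod_update s hw
  rw [analyticOrderAt_congr hsplit, analyticOrderAt_mul hfactor hrest,
    hrest.analyticOrderAt_eq_zero.2 hrest_ne, add_zero]

end Holomorphic

end NormallySummableOn

-- Being small on the largest `K n`, `n < N`, where this is possible suffices.
lemma exists_mem_forall_lt_norm_le {X E : Type*} [Norm E] {K : ℕ → Set X}
    (hK : Monotone K) {A : Set (X → E)} (hA : A.Nonempty) {ε : ℝ} (hε : 0 < ε) (N : ℕ) :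
    ∃ φ ∈ A, ∀ n < N, (∀ δ > (0 : ℝ), ∃ ψ ∈ A, ∀ z ∈ K n, ‖ψ z‖ ≤ δ) →
      ∀ z ∈ K n, ‖φ z‖ ≤ ε := by
  induction N with
  | zero => exact hA.imp fun φ hφ => ⟨hφ, fun n hn => absurd hn n.not_lt_zero⟩
  | succ N ih =>
    by_cases hN : ∀ δ > (0 : ℝ), ∃ ψ ∈ A, ∀ z ∈ K N, ‖ψ z‖ ≤ δ
    · obtain ⟨φ, hφ, hle⟩ := hN ε hε
      exact ⟨φ, hφ, fun n hn _ z hz => hle z (hK (Nat.le_of_lt_succ hn) hz)⟩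
    · obtain ⟨φ, hφ, hle⟩ := ih
      refine ⟨φ, hφ, fun n hn hsmall => ?_⟩
      rcases (Nat.le_of_lt_succ hn).lt_or_eq with hlt | rfl
      · exact hle n hlt hsmall
      · exact absurd hsmall hN

lemma exists_forall_mem_normallySummableOn {ι X E : Type*} [Countable ι] [TopologicalSpace X]
    [Norm E] {D : Set X} [WeaklyLocallyCompactSpace D] [SigmaCompactSpace D]
    {A : ι → Set (X → E)} (hne : ∀ i, (A i).Nonempty)
    (hA : ∀ K ⊆ D, IsCompact K →
      ∀ᶠ i in cofinite, ∀ ε > (0 : ℝ), ∃ φ ∈ A i, ∀ z ∈ K, ‖φ z‖ ≤ ε) :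
    ∃ φ : ι → X → E, (∀ i, φ i ∈ A i) ∧ NormallySummableOn φ D := by
  obtain ⟨index, hindex⟩ := exists_injective_nat ι
  let exhaustion := CompactExhaustion.choice D
  let K : ℕ → Set X := fun n => (↑) '' exhaustion n
  have hKmono : Monotone K := fun m n hmn => image_mono (exhaustion.subset hmn)
  choose φ hφA hφ using fun i => exists_mem_forall_lt_norm_le hKmono (hne i)
    (ε := (1 / 2) ^ index i) (by positivity) (index i)
  refine ⟨φ, hφA, fun L hLD hL =>
    ⟨_, summable_geometric_two.comp_injective hindex, ?_⟩⟩
  obtain ⟨n, hn⟩ := exhaustion.exists_superset_of_isCompact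
    (Subtype.isCompact_iff.2 (by rwa [Subtype.image_preimage_coe, inter_eq_right.2 hLD]) :
      IsCompact ((↑) ⁻¹' L : Set D))
  have hlarge : ∀ᶠ i in cofinite, n < index i :=
    (Nat.cofinite_eq_atTop ▸ hindex.tendsto_cofinite).eventually_gt_atTop n
  filter_upwards [hlarge, hA (K n) (Subtype.coe_image_subset _ _)
    ((exhaustion.isCompact n).image continuous_subtype_val)] with i hi hsmall z hz
  exact hφ i n hi hsmall z ⟨⟨z, hLD hz⟩, hn hz, rfl⟩

end NormalConvergence

section Weierstrass

/-- `IsLocalizer D a K g`: the holomorphic function `g` has no zeros on `D`, and `(z - a) * g z`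
stays close to `1` for `z` in `K`. It serves to push a zero at `a` away from `K`. -/
structure IsLocalizer (D : Set ℂ) (a : ℂ) (K : Set ℂ) (g : ℂ → ℂ) : Prop where
  analyticOnNhd : AnalyticOnNhd ℂ g D
  ne_zero : ∀ z ∈ D, g z ≠ 0
  norm_one_sub_le : ∀ z ∈ K, ‖1 - (z - a) * g z‖ ≤ 1 / 2

-- A point `a ∉ L` is close to some `b ∉ D`, and then `g z = 1 / (z - b)` works, or it is far from
-- the origin, and then `g z = -1 / a` works.
lemma exists_isCompact_forall_exists_isLocalizer {D K : Set ℂ} (hD : IsOpen D) (hKD : K ⊆ D)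
    (hK : IsCompact K) :
    ∃ L ⊆ D, IsCompact L ∧ ∀ a ∉ L, ∃ g, IsLocalizer D a K g := by
  obtain ⟨R, hR, hKR⟩ := hK.isBounded.exists_pos_norm_le
  obtain ⟨δ, hδ, hKδ⟩ := hK.exists_thickening_subset_open hD hKD
  refine ⟨Metric.closedBall 0 (2 * R) \ Metric.thickening (δ / 2) Dᶜ, fun z hz => ?_,
    (isCompact_closedBall _ _).diff Metric.isOpen_thickening, fun a ha => ?_⟩
  · exact notMem_compl_iff.1 fun h => hz.2 (Metric.self_subset_thickening (half_pos hδ) _ h)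
  by_cases haR : a ∈ Metric.closedBall 0 (2 * R)
  · have hab : a ∈ Metric.thickening (δ / 2) Dᶜ := not_not.1 fun h => ha ⟨haR, h⟩
    obtain ⟨b, hb, hab⟩ := Metric.mem_thickening_iff.1 hab
    have hne : ∀ z ∈ D, z - b ≠ 0 := fun z hz => sub_ne_zero.2 (by rintro rfl; exact hb hz)
    refine ⟨fun z => (z - b)⁻¹, fun z hz => (by fun_prop : AnalyticAt ℂ (· - b) z).inv (hne z hz),
      fun z hz => inv_ne_zero (hne z hz), fun z hz => ?_⟩
    have hδz : δ ≤ ‖z - b‖ := by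
      rw [← dist_eq_norm, dist_comm]
      exact not_lt.1 fun h => hb (hKδ (Metric.mem_thickening_iff.2 ⟨z, hz, h⟩))
    have hratio : 1 - (z - a) * (z - b)⁻¹ = (a - b) / (z - b) := by
      field_simp [hne z (hKD hz)]
      ring
    rw [hratio, norm_div, div_le_iff₀ (hδ.trans_le hδz)]
    rw [dist_eq_norm] at hab
    linarith
  · rw [mem_closedBall_zero_iff, not_le] at haR
    have ha0 : a ≠ 0 := norm_pos_iff.1 ((by positivity : 0 < 2 * R).trans haR)
    refine ⟨fun _ => -a⁻¹, analyticOnNhd_const, fun _ _ => neg_ne_zero.2 (inv_ne_zero ha0),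
      fun z hz => ?_⟩
    have hratio : 1 - (z - a) * -a⁻¹ = z / a := by
      field_simp
      ring
    rw [hratio, norm_div, div_le_iff₀ (norm_pos_iff.2 ha0)]
    linarith [hKR z hz]

-- The function `(1 + t) * exp (-logTaylor N t)` is the Weierstrass elementary factor `E_{N-1}(-t)`.
lemma exists_forall_norm_one_add_mul_exp_neg_logTaylor_pow_sub_one_le (n : ℕ) {ε : ℝ}
    (hε : 0 < ε) :
    ∃ N : ℕ, ∀ t : ℂ, ‖t‖ ≤ 1 / 2 →
      ‖((1 + t) * Complex.exp (-Complex.logTaylor N t)) ^ n - 1‖ ≤ ε := by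
  have hcont : Continuous fun w : ℂ => Complex.exp (n * w) := by fun_prop
  obtain ⟨η, hη, hexp⟩ := Metric.continuous_iff.1 hcont 0 ε hε
  obtain ⟨N, hN⟩ := exists_pow_lt_of_lt_one hη one_half_lt_one
  refine ⟨N + 1, fun t ht => ?_⟩
  have ht1 : ‖t‖ < 1 := ht.trans_lt one_half_lt_one
  have hlog : Complex.exp (Complex.log (1 + t)) = 1 + t :=
    Complex.exp_log (Complex.slitPlane_ne_zero (Complex.mem_slitPlane_of_norm_lt_one ht1))
  have hsmall : ‖Complex.log (1 + t) - Complex.logTaylor (N + 1) t‖ < η := by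
    calc _ ≤ ‖t‖ ^ (N + 1) * (1 - ‖t‖)⁻¹ / (N + 1) := Complex.norm_log_sub_logTaylor_le N ht1
      _ ≤ ‖t‖ ^ (N + 1) * (1 - ‖t‖)⁻¹ := div_le_self (by positivity) (by simp)
      _ ≤ (1 / 2) ^ (N + 1) * (1 - 1 / 2)⁻¹ := by gcongr
      _ = (1 / 2) ^ N := by ring
      _ < η := hN
  rw [← hlog, ← Complex.exp_add, ← Complex.exp_nat_mul, ← sub_eq_add_neg]
  simpa [dist_eq_norm] using (hexp _ (by simpa using hsmall)).le

lemma IsLocalizer.exists_norm_pow_sub_one_le {D K : Set ℂ} {a : ℂ} {g : ℂ → ℂ}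
    (hg : IsLocalizer D a K g) (n : ℕ) {ε : ℝ} (hε : 0 < ε) :
    ∃ e, AnalyticOnNhd ℂ e D ∧ (∀ z ∈ D, e z ≠ 0) ∧ ∀ z ∈ K, ‖((z - a) * e z) ^ n - 1‖ ≤ ε := by
  obtain ⟨N, hN⟩ := exists_forall_norm_one_add_mul_exp_neg_logTaylor_pow_sub_one_le n hε
  have hlogTaylor : Differentiable ℂ (Complex.logTaylor N) := by
    unfold Complex.logTaylor
    fun_prop
  refine ⟨fun z => g z * Complex.exp (-Complex.logTaylor N ((z - a) * g z - 1)),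
    fun z hz => ?_, fun z hz => mul_ne_zero (hg.ne_zero z hz) (Complex.exp_ne_zero _),
    fun z hz => ?_⟩
  · have hgz := hg.analyticOnNhd z hz
    have hinner : AnalyticAt ℂ (fun w => (w - a) * g w - 1) z := by fun_prop
    exact hgz.mul ((hlogTaylor.analyticAt _).comp hinner).neg.cexp
  · have := hN ((z - a) * g z - 1) (by simpa only [norm_sub_rev] using hg.norm_one_sub_le z hz)
    rwa [add_sub_cancel, mul_assoc] at this

lemma eventually_cofinite_exists_isLocalizer {D S K : Set ℂ} (hD : IsOpen D)
    (hS : Sᶜ ∈ codiscreteWithin D) (hKD : K ⊆ D) (hK : IsCompact K) :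
    ∀ᶠ a : ↥(S ∩ D) in cofinite, ∃ g, IsLocalizer D a K g := by
  obtain ⟨L, hLD, hL, hloc⟩ := exists_isCompact_forall_exists_isLocalizer hD hKD hK
  refine (((finite_inter_of_compl_mem_codiscreteWithin hS hLD hL).preimage
    Subtype.val_injective.injOn).subset fun a ha => ⟨a.2.1, ?_⟩ :
      {a : ↥(S ∩ D) | ¬∃ g, IsLocalizer D a K g}.Finite)
  exact not_not.1 fun haL => ha (hloc a haL)

lemma analyticOrderAt_sub_mul_pow {𝕜 : Type*} [NontriviallyNormedField 𝕜] {a : 𝕜} {e : 𝕜 → 𝕜}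
    (he : AnalyticAt 𝕜 e a) (he0 : e a ≠ 0) (n : ℕ) :
    analyticOrderAt (fun z => ((z - a) * e z) ^ n) a = n := by
  have hsub : AnalyticAt 𝕜 (· - a) a := by fun_prop
  have hord : analyticOrderAt ((· - a) * e) a = 1 := by
    rw [analyticOrderAt_mul hsub he, he.analyticOrderAt_eq_zero.2 he0, add_zero]
    exact analyticOrderAt_id_sub_const_self
  exact (analyticOrderAt_pow (hsub.mul he) n).trans (by rw [hord, nsmul_one])

theorem exists_analyticOnNhd_forall_analyticOrderAt_eq {D : Set ℂ} (hD : IsOpen D) {m : ℂ → ℕ}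
    (hm : {z | m z = 0} ∈ codiscreteWithin D) :
    ∃ H : ℂ → ℂ, AnalyticOnNhd ℂ H D ∧ ∀ z ∈ D, analyticOrderAt H z = m z := by
  let S : Set ℂ := {z | m z = 0}ᶜ
  have hS : Sᶜ ∈ codiscreteWithin D := by rwa [compl_compl]
  have := (countable_inter_of_compl_mem_codiscreteWithin hS).to_subtype
  have := hD.locallyCompactSpace
  obtain ⟨φ, hφ, hsum⟩ := exists_forall_mem_normallySummableOn (D := D)
    (A := fun a : ↥(S ∩ D) => {φ : ℂ → ℂ | ∃ e, AnalyticOnNhd ℂ e D ∧ (∀ z ∈ D, e z ≠ 0) ∧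
      φ = fun z => ((z - a) * e z) ^ m a - 1})
    (fun a => ⟨_, 1, analyticOnNhd_const, fun _ _ => one_ne_zero, rfl⟩)
    (fun K hKD hK => (eventually_cofinite_exists_isLocalizer hD hS hKD hK).mono
      fun a ⟨g, hg⟩ ε hε => by
        obtain ⟨e, he, he0, hle⟩ := hg.exists_norm_pow_sub_one_le (m a) hε
        exact ⟨_, ⟨e, he, he0, rfl⟩, hle⟩)
  choose e he he0 hφe using hφ
  have hbase : ∀ a, AnalyticOnNhd ℂ (fun z => (z - a) * e a z) D := fun a z hz =>
    (by fun_prop : AnalyticAt ℂ (· - (a : ℂ)) z).mul (he a z hz)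
  have hφD : ∀ a, AnalyticOnNhd ℂ (φ a) D := fun a z hz => by
    rw [hφe]
    exact ((hbase a z hz).pow _).sub analyticAt_const
  have hfactor : ∀ (a : ↥(S ∩ D)) (z : ℂ), 1 + φ a z = ((z - a) * e a z) ^ m a := fun a z => by
    rw [hφe, add_sub_cancel]
  have hfactor_ne : ∀ a : ↥(S ∩ D), ∀ z ∈ D, z ≠ a → 1 + φ a z ≠ 0 := fun a z hz hza => by
    rw [hfactor]
    exact pow_ne_zero _ (mul_ne_zero (sub_ne_zero.2 hza) (he0 a z hz))
  refine ⟨fun z => ∏' a, (1 + φ a z), hsum.analyticOnNhd_tprod_one_add hD hφD, fun z hz => ?_⟩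
  by_cases hzS : z ∈ S
  · rw [hsum.analyticOrderAt_tprod_one_add hD hφD ⟨z, hzS, hz⟩ hz
      fun a ha => hfactor_ne a z hz fun h => ha (Subtype.ext h.symm)]
    simpa only [hfactor] using analyticOrderAt_sub_mul_pow (he _ z hz) (he0 _ z hz) (m z)
  · rw [not_not.1 hzS, Nat.cast_zero, analyticOrderAt_eq_zero]
    exact .inr (tprod_one_add_ne_zero_of_summable
      (fun a => hfactor_ne a z hz fun h => hzS (h ▸ a.2.1)) (hsum.summable_norm hz))

lemma IsLocalizer.exists_norm_le {D K : Set ℂ} {a : ℂ} {g ψ : ℂ → ℂ} (hg : IsLocalizer D a K g)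
    (hψ : AnalyticOnNhd ℂ ψ D) (hKD : K ⊆ D) (hK : IsCompact K) {ε : ℝ} (hε : 0 < ε) :
    ∃ q : ℂ → ℂ, AnalyticOnNhd ℂ q D ∧ q a = 1 ∧ ∀ z ∈ K, ‖(ψ * q) z‖ ≤ ε := by
  obtain ⟨M, hM, hψM⟩ := (hK.image_of_continuousOn
    (hψ.continuousOn.mono hKD)).isBounded.exists_pos_norm_le
  obtain ⟨k, hk⟩ := exists_pow_lt_of_lt_one (div_pos hε hM) one_half_lt_one
  refine ⟨fun z => (1 - (z - a) * g z) ^ k, fun z hz => ?_, by simp, fun z hz => ?_⟩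
  · have := hg.analyticOnNhd z hz
    fun_prop
  · calc ‖ψ z * (1 - (z - a) * g z) ^ k‖ = ‖ψ z‖ * ‖1 - (z - a) * g z‖ ^ k := by
          rw [norm_mul, norm_pow]
      _ ≤ M * (1 / 2) ^ k := by
          gcongr
          exacts [hψM _ (mem_image_of_mem ψ hz), hg.norm_one_sub_le z hz]
      _ ≤ M * (ε / M) := by gcongr
      _ = ε := by field_simp

lemma exists_analyticOnNhd_eq_of_forall_ne_eq_zero {D S : Set ℂ} (hD : IsOpen D)
    (hS : Sᶜ ∈ codiscreteWithin D) {a : ℂ} (ha : a ∈ D) (c : ℂ) :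
    ∃ ψ, AnalyticOnNhd ℂ ψ D ∧ ψ a = c ∧ ∀ b ∈ S ∩ D, b ≠ a → ψ b = 0 := by
  classical
  obtain ⟨H, hH, hord⟩ := exists_analyticOnNhd_forall_analyticOrderAt_eq hD
    (m := fun z => if z ∈ S \ {a} then 1 else 0)
    (mem_of_superset hS fun z hz => if_neg fun h => hz h.1)
  have hHa : H a ≠ 0 := by
    rw [← (hH a ha).analyticOrderAt_eq_zero, hord a ha]
    simp
  refine ⟨fun z => c / H a * H z, fun z hz => analyticAt_const.mul (hH z hz),
    div_mul_cancel₀ c hHa, fun b hb hba => ?_⟩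
  have hHb : H b = 0 :=
    apply_eq_zero_of_analyticOrderAt_ne_zero (by simp [hord b hb.2, hb.1, hba])
  exact mul_eq_zero_of_right _ hHb

theorem exists_analyticOnNhd_eqOn {D S : Set ℂ} (hD : IsOpen D) (hS : Sᶜ ∈ codiscreteWithin D)
    (w : ℂ → ℂ) : ∃ u, AnalyticOnNhd ℂ u D ∧ EqOn u w (S ∩ D) := by
  have := (countable_inter_of_compl_mem_codiscreteWithin hS).to_subtype
  have := hD.locallyCompactSpace
  obtain ⟨φ, hφ, hsum⟩ := exists_forall_mem_normallySummableOn (D := D)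
    (A := fun a : ↥(S ∩ D) => {φ : ℂ → ℂ | AnalyticOnNhd ℂ φ D ∧ φ a = w a ∧
      ∀ b ∈ S ∩ D, b ≠ a → φ b = 0})
    (fun a => exists_analyticOnNhd_eq_of_forall_ne_eq_zero hD hS a.2.2 (w a))
    (fun K hKD hK => (eventually_cofinite_exists_isLocalizer hD hS hKD hK).mono
      fun a ⟨g, hg⟩ ε hε => by
        obtain ⟨ψ, hψ, hψa, hψ0⟩ := exists_analyticOnNhd_eq_of_forall_ne_eq_zero hD hS a.2.2 (w a)
        obtain ⟨q, hq, hqa, hle⟩ := hg.exists_norm_le hψ hKD hK hε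
        exact ⟨ψ * q, ⟨hψ.mul hq, by rw [Pi.mul_apply, hψa, hqa, mul_one],
          fun b hb hba => by rw [Pi.mul_apply, hψ0 b hb hba, zero_mul]⟩, hle⟩)
  refine ⟨fun z => ∑' a, φ a z, hsum.analyticOnNhd_tsum hD fun a => (hφ a).1, fun b hb => ?_⟩
  exact (tsum_eq_single ⟨b, hb⟩ fun a hab => (hφ a).2.2 b hb
    fun h => hab (Subtype.ext h.symm)).trans (hφ ⟨b, hb⟩).2.1

end Weierstrass

section Pencil

lemma volume_image_eq_zero_of_hasDerivAt_zero {f : ℂ → ℂ} {s : Set ℂ}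
    (hf : ∀ z ∈ s, HasDerivAt f 0 z) : MeasureTheory.volume (f '' s) = 0 := by
  refine MeasureTheory.addHaar_image_eq_zero_of_det_fderivWithin_eq_zero _ (f' := fun _ => 0)
    (fun z hz => ?_) fun z _ => ?_
  · simpa using ((hf z hz).hasFDerivAt.restrictScalars ℝ).hasFDerivWithinAt
  · simp [ContinuousLinearMap.det]

-- If `p + c • F` has a multiple zero, then `c` is a critical value of `-p / F`.
lemma exists_forall_analyticOrderAt_add_const_smul_le_one {D : Set ℂ} {F p : ℂ → ℂ}
    (hF : AnalyticOnNhd ℂ F D) (hp : AnalyticOnNhd ℂ p D) (hne : ∀ z ∈ D, F z = 0 → p z ≠ 0) :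
    ∃ c : ℂ, ∀ z ∈ D, analyticOrderAt (p + c • F) z ≤ 1 := by
  let q : ℂ → ℂ := -p / F
  obtain ⟨c, hc⟩ : (q '' {z | HasDerivAt q 0 z})ᶜ.Nonempty :=
    nonempty_of_mem (MeasureTheory.compl_mem_ae_iff.2
      (volume_image_eq_zero_of_hasDerivAt_zero fun z hz => hz))
  refine ⟨c, fun z hz => ?_⟩
  have hsum : AnalyticAt ℂ (p + c • F) z := (hp z hz).add ((hF z hz).const_smul)
  by_cases hzero : (p + c • F) z = 0
  swap
  · exact (hsum.analyticOrderAt_eq_zero.2 hzero).trans_le zero_le_one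
  simp only [Pi.add_apply, Pi.smul_apply, smul_eq_mul] at hzero
  have hFz : F z ≠ 0 := fun h => hne z hz h (by simpa [h] using hzero)
  have hqz : q z = c := by
    simp only [q, Pi.div_apply, Pi.neg_apply]
    field_simp
    linear_combination -hzero
  have hpd := (hp z hz).differentiableAt.hasDerivAt
  have hFd := (hF z hz).differentiableAt.hasDerivAt
  refine (hsum.analyticOrderAt_eq_one_of_zero_deriv_ne_zero (by simpa using hzero)
    fun hderiv => hc ⟨z, ?_, hqz⟩).le
  rw [(hpd.add (hFd.const_smul c)).deriv, smul_eq_mul] at hderiv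
  change HasDerivAt q 0 z
  convert! hpd.neg.div hFd hFz using 1
  rw [Pi.neg_apply]
  field_simp
  linear_combination F z * hderiv - hzero * deriv F z

end Pencil

namespace Hol

variable {D : Set ℂ}

/-- The extension of `f : Hol D` by zero to the plane, through which the theory of holomorphic
functions of a complex variable applies to `f`. -/
noncomputable def extend (f : Hol D) : ℂ → ℂ := Function.extend Subtype.val (f : D → ℂ) 0

/-- The order of vanishing of `f : Hol D` at `ζ`. It is `⊤` when `f` vanishes near `ζ`. -/
noncomputable def ord (f : Hol D) (ζ : D) : ℕ∞ := analyticOrderAt (extend f) ζ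

/-- The element of `Hol D` given by a function on the plane that is holomorphic on `D`. -/
def ofAnalyticOnNhd (F : ℂ → ℂ) (hF : AnalyticOnNhd ℂ F D) : Hol D :=
  ⟨fun z => F z, F, hF.differentiableOn, fun _ => rfl⟩

@[simp]
lemma ofAnalyticOnNhd_apply {F : ℂ → ℂ} (hF : AnalyticOnNhd ℂ F D) (z : D) :
    (ofAnalyticOnNhd F hF : D → ℂ) z = F z :=
  rfl

@[simp]
lemma extend_coe (f : Hol D) (z : D) : extend f z = (f : D → ℂ) z :=
  Subtype.val_injective.extend_apply _ _ z

lemma extend_eqOn_of_forall_eq {f : Hol D} {F : ℂ → ℂ} (h : ∀ z : D, (f : D → ℂ) z = F z) :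
    EqOn (extend f) F D := fun z hz =>
  (extend_coe f ⟨z, hz⟩).trans (h ⟨z, hz⟩)

lemma analyticOnNhd_extend (hD : IsOpen D) (f : Hol D) : AnalyticOnNhd ℂ (extend f) D := by
  obtain ⟨F, hF, hFf⟩ := f.2
  exact (hF.congr (extend_eqOn_of_forall_eq fun z => (hFf z).symm)).analyticOnNhd hD

lemma ord_eq_analyticOrderAt (hD : IsOpen D) {f : Hol D} {F : ℂ → ℂ}
    (h : ∀ z : D, (f : D → ℂ) z = F z) (ζ : D) : ord f ζ = analyticOrderAt F ζ :=
  analyticOrderAt_congr ((extend_eqOn_of_forall_eq h).eventuallyEq_of_mem (hD.mem_nhds ζ.2))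

lemma ord_ofAnalyticOnNhd (hD : IsOpen D) {F : ℂ → ℂ} (hF : AnalyticOnNhd ℂ F D) (ζ : D) :
    ord (ofAnalyticOnNhd F hF) ζ = analyticOrderAt F ζ :=
  ord_eq_analyticOrderAt hD (ofAnalyticOnNhd_apply hF) ζ

lemma ord_mul (hD : IsOpen D) (f g : Hol D) (ζ : D) : ord (f * g) ζ = ord f ζ + ord g ζ := by
  rw [ord_eq_analyticOrderAt hD (F := extend f * extend g) (by simp)]
  exact analyticOrderAt_mul (analyticOnNhd_extend hD f ζ ζ.2) (analyticOnNhd_extend hD g ζ ζ.2)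

lemma ord_eq_zero (hD : IsOpen D) {f : Hol D} {ζ : D} : ord f ζ = 0 ↔ (f : D → ℂ) ζ ≠ 0 := by
  rw [ord, (analyticOnNhd_extend hD f ζ ζ.2).analyticOrderAt_eq_zero, extend_coe]

lemma ord_ne_zero (hD : IsOpen D) {f : Hol D} {ζ : D} : ord f ζ ≠ 0 ↔ (f : D → ℂ) ζ = 0 :=
  (ord_eq_zero hD).not_left

lemma dvd_of_ord_le (hD : IsOpen D) {f g : Hol D} (hf : ∀ ζ, ord f ζ ≠ ⊤)
    (hle : ∀ ζ, ord f ζ ≤ ord g ζ) : f ∣ g := by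
  obtain ⟨G, hG, hmul⟩ := exists_analyticOnNhd_eqOn_mul (analyticOnNhd_extend hD g)
    (analyticOnNhd_extend hD f) (fun z hz => hf ⟨z, hz⟩) fun z hz => hle ⟨z, hz⟩
  refine ⟨ofAnalyticOnNhd G hG, Subtype.ext (funext fun z => ?_)⟩
  simpa using hmul z.2

lemma ordGE_iff (hD : IsOpen D) {f : Hol D} {ζ : D} {n : ℕ} : ordGE f ζ n ↔ n ≤ ord f ζ := by
  let monomial : Hol D := ofAnalyticOnNhd ((· - (ζ : ℂ)) ^ n) fun z _ => by fun_prop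
  have hself : ord monomial ζ = n :=
    (ord_ofAnalyticOnNhd hD _ ζ).trans analyticOrderAt_centeredMonomial
  have hother : ∀ z ≠ ζ, ord monomial z = 0 := fun z hz =>
    (ord_eq_zero hD).2 (pow_ne_zero n (sub_ne_zero.2 (Subtype.coe_injective.ne hz)))
  have hdvd : ordGE f ζ n ↔ monomial ∣ f := exists_congr fun g =>
    ⟨fun h => Subtype.ext (funext h), fun h z => congrFun (congrArg Subtype.val h) z⟩
  rw [hdvd]
  refine ⟨fun ⟨g, hg⟩ => ?_, fun hn => dvd_of_ord_le hD (fun z => ?_) fun z => ?_⟩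
  · rw [hg, ord_mul hD, hself]
    exact le_self_add
  all_goals rcases eq_or_ne z ζ with rfl | hz
  · simp [hself]
  · simp [hother z hz]
  · rwa [hself]
  · simp [hother z hz]

lemma oInf_iff (hD : IsOpen D) [Nonempty D] {f : Hol D} :
    oInf f ↔ ∀ n : ℕ, ∃ ζ, n < ord f ζ := by
  refine ⟨?_, fun h => .inr fun n => ?_⟩
  · rintro (rfl | h) n
    · obtain ⟨ζ⟩ := ‹Nonempty D›
      refine ⟨ζ, ?_⟩
      rw [ord_eq_analyticOrderAt hD (F := 0) fun z => rfl, analyticOrderAt_eq_top.2 (by simp)]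
      exact ENat.natCast_lt_top n
    · obtain ⟨ζ, -, hζ⟩ := h (n + 1)
      exact ⟨ζ, (Nat.cast_lt.2 n.lt_succ_self).trans_le ((ordGE_iff hD).1 hζ)⟩
  · obtain ⟨ζ, hζ⟩ := h n
    exact ⟨ζ, (ord_ne_zero hD).1 (bot_le.trans_lt hζ).ne', (ordGE_iff hD).2 hζ.le⟩

lemma compl_setOf_extend_eq_zero_mem_codiscreteWithin (hD : IsOpen D) {f : Hol D}
    (hf : ∀ ζ, ord f ζ ≠ ⊤) : {z | extend f z = 0}ᶜ ∈ codiscreteWithin D := by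
  have hext := analyticOnNhd_extend hD f
  filter_upwards [hext.codiscreteWithin_setOfPred_analyticOrderAt_eq_zero_or_top,
    self_mem_codiscreteWithin D] with z hz hzD h0
  rcases hz with hz | hz
  · exact (ord_ne_zero hD (ζ := ⟨z, hzD⟩)).2 (by rwa [← extend_coe]) hz
  · exact hf ⟨z, hzD⟩ hz

lemma exists_forall_ord_eq (hD : IsOpen D) {f : Hol D} (hf : ∀ ζ, ord f ζ ≠ ⊤) {m : D → ℕ∞}
    (hm : ∀ ζ, m ζ ≤ ord f ζ) : ∃ g : Hol D, ∀ ζ, ord g ζ = m ζ := by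
  let M : ℂ → ℕ := Function.extend Subtype.val (fun ζ => (m ζ).toNat) 0
  have hM : ∀ ζ : D, M ζ = m ζ := fun ζ => by
    rw [show M ζ = (m ζ).toNat from Subtype.val_injective.extend_apply _ _ ζ,
      ENat.natCast_toNat (ne_top_of_le_ne_top (hf ζ) (hm ζ))]
  have hM0 : {z | M z = 0} ∈ codiscreteWithin D := by
    filter_upwards [compl_setOf_extend_eq_zero_mem_codiscreteWithin hD hf,
      self_mem_codiscreteWithin D] with z hz hzD
    have hord : ord f ⟨z, hzD⟩ = 0 := (ord_eq_zero hD).2 (by rwa [← extend_coe])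
    have hMz := hM ⟨z, hzD⟩
    rw [nonpos_iff_eq_zero.1 ((hm ⟨z, hzD⟩).trans_eq hord)] at hMz
    exact_mod_cast hMz
  obtain ⟨H, hH, hord⟩ := exists_analyticOnNhd_forall_analyticOrderAt_eq hD hM0
  refine ⟨ofAnalyticOnNhd H hH, fun ζ => ?_⟩
  rw [ord_ofAnalyticOnNhd hD, hord ζ ζ.2, hM]

lemma exists_forall_eq_of_eq_zero (hD : IsOpen D) {f : Hol D} (hf : ∀ ζ, ord f ζ ≠ ⊤)
    (w : D → ℂ) : ∃ u : Hol D, ∀ ζ, (f : D → ℂ) ζ = 0 → (u : D → ℂ) ζ = w ζ := by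
  obtain ⟨u, hu, huw⟩ := exists_analyticOnNhd_eqOn hD
    (compl_setOf_extend_eq_zero_mem_codiscreteWithin hD hf) (Function.extend Subtype.val w 0)
  refine ⟨ofAnalyticOnNhd u hu, fun ζ hζ => ?_⟩
  rw [ofAnalyticOnNhd_apply, huw ⟨(extend_coe f ζ).trans hζ, ζ.2⟩,
    Subtype.val_injective.extend_apply]

lemma isCoprime_of_ord_le_one (hD : IsOpen D) {f g : Hol D} (hf : ∀ ζ, ord f ζ ≤ 1)
    (hfg : ∀ ζ, (f : D → ℂ) ζ = 0 → (g : D → ℂ) ζ ≠ 0) : IsCoprime f g := by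
  have hf_top : ∀ ζ, ord f ζ ≠ ⊤ := fun ζ => ((hf ζ).trans_lt ENat.one_lt_top).ne
  obtain ⟨u, hu⟩ := exists_forall_eq_of_eq_zero hD hf_top fun ζ => ((g : D → ℂ) ζ)⁻¹
  obtain ⟨v, hv⟩ : f ∣ 1 - u * g := dvd_of_ord_le hD hf_top fun ζ => by
    by_cases hζ : (f : D → ℂ) ζ = 0
    · refine (hf ζ).trans (Order.one_le_iff_ne_zero.2 ((ord_ne_zero hD).2 ?_))
      simp [hu ζ hζ, hfg ζ hζ]
    · simp [(ord_eq_zero hD).2 hζ]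
  exact ⟨v, u, by linear_combination -hv⟩

lemma exists_forall_ord_add_smul_le_one (hD : IsOpen D) {f p : Hol D}
    (hfp : ∀ ζ, (f : D → ℂ) ζ = 0 → (p : D → ℂ) ζ ≠ 0) :
    ∃ c : ℂ, ∀ ζ, ord (p + c • f) ζ ≤ 1 := by
  obtain ⟨c, hc⟩ := exists_forall_analyticOrderAt_add_const_smul_le_one
    (analyticOnNhd_extend hD f) (analyticOnNhd_extend hD p)
    fun z hz => by simpa only [← extend_coe] using hfp ⟨z, hz⟩
  refine ⟨c, fun ζ => ?_⟩
  rw [ord_eq_analyticOrderAt hD (F := extend p + c • extend f) (by simp)]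
  exact hc ζ ζ.2

end Hol

open Hol

section Ideals

variable {D : Set ℂ} {P : Ideal (Hol D)}

lemma isMaximal_of_ord_le_one (hD : IsOpen D) (hP : P.IsPrime) {h : Hol D} (hhP : h ∈ P)
    (hh : ∀ ζ, ord h ζ ≤ 1) : P.IsMaximal := by
  have hh_top : ∀ ζ, ord h ζ ≠ ⊤ := fun ζ => ((hh ζ).trans_lt ENat.one_lt_top).ne
  refine Ideal.isMaximal_iff.2 ⟨P.one_notMem, fun J g hPJ hgP hgJ => ?_⟩
  obtain ⟨a, ha⟩ := exists_forall_ord_eq hD hh_top fun ζ => min_le_left (ord h ζ) (ord g ζ)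
  have ha_top : ∀ ζ, ord a ζ ≠ ⊤ := fun ζ => by simp [ha, hh_top]
  have hag : a ∣ g := dvd_of_ord_le hD ha_top fun ζ => by simp [ha]
  obtain ⟨b, rfl⟩ : a ∣ h := dvd_of_ord_le hD ha_top fun ζ => by simp [ha]
  have hbP : b ∈ P := (hP.mem_or_mem hhP).resolve_left fun haP => hgP (P.mem_of_dvd hag haP)
  have hbg : IsCoprime b g := by
    refine isCoprime_of_ord_le_one hD (fun ζ => ?_) fun ζ hbζ hgζ => ?_
    · exact le_add_self.trans ((ord_mul hD a b ζ).symm.trans_le (hh ζ))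
    · have hb1 : 1 ≤ ord b ζ := Order.one_le_iff_ne_zero.2 ((ord_ne_zero hD).2 hbζ)
      have hg1 : 1 ≤ ord g ζ := Order.one_le_iff_ne_zero.2 ((ord_ne_zero hD).2 hgζ)
      have ha1 : 1 ≤ ord a ζ := by
        rw [ha, ord_mul hD]
        exact le_min (hb1.trans le_add_self) hg1
      have hab : ord a ζ + ord b ζ ≤ 1 := (ord_mul hD a b ζ).symm.trans_le (hh ζ)
      exact absurd ((add_le_add ha1 hb1).trans hab) (by decide)
  obtain ⟨x, y, hxy⟩ := hbg
  rw [← hxy]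
  exact J.add_mem (J.mul_mem_left x (hPJ hbP)) (J.mul_mem_left y hgJ)

lemma exists_mem_ord_le_one_of_ord_le (hD : IsOpen D) (hP : P.IsPrime) (n : ℕ) :
    ∀ f ∈ P, (∀ ζ, ord f ζ ≤ n) → ∃ h ∈ P, ∀ ζ, ord h ζ ≤ 1 := by
  induction n with
  | zero => exact fun f hfP hf => ⟨f, hfP, fun ζ => (hf ζ).trans (by simp)⟩
  | succ n ih =>
    intro f hfP hf
    have hf_top : ∀ ζ, ord f ζ ≠ ⊤ := fun ζ => ((hf ζ).trans_lt (ENat.natCast_lt_top _)).ne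
    obtain ⟨r, hr⟩ := exists_forall_ord_eq hD hf_top fun ζ => min_le_right 1 (ord f ζ)
    obtain ⟨q, rfl⟩ : r ∣ f := dvd_of_ord_le hD (fun ζ => by simp [hr]) fun ζ => by simp [hr]
    rcases hP.mem_or_mem hfP with hrP | hqP
    · exact ⟨r, hrP, fun ζ => (hr ζ).trans_le (min_le_left _ _)⟩
    · refine ih q hqP fun ζ => ?_
      rcases eq_or_ne (ord q ζ) 0 with hq | hq
      · simp [hq]
      have hr1 : ord r ζ = 1 := by
        rw [hr, ord_mul hD, min_eq_left]
        exact (Order.one_le_iff_ne_zero.2 hq).trans le_add_self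
      have hfζ := hf ζ
      rw [ord_mul hD, hr1, Nat.cast_succ, add_comm] at hfζ
      exact (ENat.add_le_add_iff_right ENat.one_ne_top).1 hfζ

lemma exists_mem_forall_eq_one_of_notMem (hP : P.IsMaximal) {g : Hol D} (hg : g ∉ P) :
    ∃ p ∈ P, ∀ ζ, (g : D → ℂ) ζ = 0 → (p : D → ℂ) ζ = 1 := by
  obtain ⟨y, p, hpP, hp⟩ := hP.exists_inv hg
  refine ⟨p, hpP, fun ζ hζ => ?_⟩
  simpa [hζ] using congrFun (congrArg Subtype.val hp) ζ

/-- A point of the connected component of `z` in `D`, the same one for all points of the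
component. -/
noncomputable def componentPoint (D : Set ℂ) (z : ℂ) : ℂ :=
  Classical.epsilon (· ∈ connectedComponentIn D z)

lemma componentPoint_mem {z : ℂ} (hz : z ∈ D) : componentPoint D z ∈ connectedComponentIn D z :=
  Classical.epsilon_spec ⟨z, mem_connectedComponentIn hz⟩

lemma componentPoint_eq {z w : ℂ} (hw : w ∈ connectedComponentIn D z) :
    componentPoint D w = componentPoint D z := by
  rw [componentPoint, ← connectedComponentIn_eq hw, componentPoint]

lemma exists_ord_le_one_forall_exists_eq_zero (hD : IsOpen D) :
    ∃ g : Hol D, (∀ ζ, ord g ζ ≤ 1) ∧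
      ∀ ζ : D, ∃ ξ : D, (ξ : ℂ) ∈ connectedComponentIn D ζ ∧ (g : D → ℂ) ξ = 0 := by
  have hlocal : ∀ z ∈ D,
      (fun w => w - componentPoint D w) =ᶠ[𝓝 z] (· - componentPoint D z) := fun z hz => by
    filter_upwards [hD.connectedComponentIn.mem_nhds (mem_connectedComponentIn hz)] with w hw
    rw [componentPoint_eq hw]
  have han : AnalyticOnNhd ℂ (fun w => w - componentPoint D w) D := fun z hz =>
    (by fun_prop : AnalyticAt ℂ (· - componentPoint D z) z).congr (hlocal z hz).symm
  refine ⟨ofAnalyticOnNhd _ han, fun ζ => ?_, fun ζ => ?_⟩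
  · rw [ord_ofAnalyticOnNhd hD, analyticOrderAt_congr (hlocal ζ ζ.2)]
    rcases eq_or_ne (componentPoint D ζ) ζ with heq | hne
    · rw [heq]
      exact analyticOrderAt_id_sub_const_self.le
    · exact (analyticOrderAt_id_sub_const_of_ne hne.symm).trans_le zero_le_one
  · have hmem := componentPoint_mem ζ.2
    refine ⟨⟨_, connectedComponentIn_subset D ζ hmem⟩, hmem, ?_⟩
    rw [ofAnalyticOnNhd_apply, componentPoint_eq hmem, sub_self]

lemma exists_mem_forall_ord_ne_top (hD : IsOpen D) (hP : P.IsMaximal) :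
    ∃ p ∈ P, ∀ ζ, ord p ζ ≠ ⊤ := by
  obtain ⟨g, hg, hzero⟩ := exists_ord_le_one_forall_exists_eq_zero hD
  by_cases hgP : g ∈ P
  · exact ⟨g, hgP, fun ζ => ((hg ζ).trans_lt ENat.one_lt_top).ne⟩
  obtain ⟨p, hpP, hp⟩ := exists_mem_forall_eq_one_of_notMem hP hgP
  refine ⟨p, hpP, fun ζ => ?_⟩
  obtain ⟨ξ, hξ, hgξ⟩ := hzero ζ
  refine ((analyticOnNhd_extend hD p).mono (connectedComponentIn_subset D
    ζ)).analyticOrderAt_ne_top_of_isPreconnected isPreconnected_connectedComponentIn hξ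
    (mem_connectedComponentIn ζ.2) (?_ : ord p ξ ≠ ⊤)
  simp [(ord_eq_zero hD).2 (hp ξ hgξ ▸ one_ne_zero)]

lemma exists_mem_ord_le_one (hD : IsOpen D) (hP : P.IsMaximal) :
    ∃ h ∈ P, ∀ ζ, ord h ζ ≤ 1 := by
  obtain ⟨p, hpP, hp⟩ := exists_mem_forall_ord_ne_top hD hP
  obtain ⟨r, hr⟩ := exists_forall_ord_eq hD hp fun ζ => min_le_right 1 (ord p ζ)
  have hr1 : ∀ ζ, ord r ζ ≤ 1 := fun ζ => (hr ζ).trans_le (min_le_left _ _)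
  by_cases hrP : r ∈ P
  · exact ⟨r, hrP, hr1⟩
  obtain ⟨q, hqP, hq⟩ := exists_mem_forall_eq_one_of_notMem hP hrP
  obtain ⟨c, hc⟩ := exists_forall_ord_add_smul_le_one (f := p) (p := q) hD fun ζ hpζ => by
    rw [hq ζ ((ord_ne_zero hD).1 (by simpa [hr] using (ord_ne_zero hD).2 hpζ))]
    exact one_ne_zero
  exact ⟨q + c • p, P.add_mem hqP (Submodule.smul_of_tower_mem P c hpP), hc⟩

theorem isMaximal_iff_exists_mem_ord_le (hD : IsOpen D) (hP : P.IsPrime) :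
    P.IsMaximal ↔ ∃ f ∈ P, ∃ n : ℕ, ∀ ζ, ord f ζ ≤ n := by
  constructor
  · intro hmax
    obtain ⟨h, hhP, hh⟩ := exists_mem_ord_le_one hD hmax
    exact ⟨h, hhP, 1, by simpa using hh⟩
  · rintro ⟨f, hfP, n, hf⟩
    obtain ⟨h, hhP, hh⟩ := exists_mem_ord_le_one_of_ord_le hD hP n f hfP hf
    exact isMaximal_of_ord_le_one hD hP hhP hh

end Ideals

theorem not_maximal_iff_oInf_general {D : Set ℂ} (hD : IsOpen D) (P : Ideal (Hol D))
    (hP : P.IsPrime) : ¬ P.IsMaximal ↔ ∀ f ∈ P, oInf f := by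
  have : Nonempty D := by
    by_contra hempty
    rw [not_nonempty_iff] at hempty
    exact P.one_notMem (Subsingleton.elim 0 (1 : Hol D) ▸ P.zero_mem)
  simp only [isMaximal_iff_exists_mem_ord_le hD hP, oInf_iff hD, not_exists, not_and, not_forall,
    not_le]

/-- Let `D` be a domain in `ℂ` and `P` a prime ideal in `H(D)`. Then `P` is not maximal if
and only if `o(f) = ∞` for every `f ∈ P`. -/
theorem not_maximal_iff_oInf {D : Set ℂ} (hD : IsOpen D) (hDconn : IsConnected D)
    (P : Ideal (Hol D)) (hP : P.IsPrime) :
    ¬ P.IsMaximal ↔ ∀ f ∈ P, oInf f :=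
  not_maximal_iff_oInf_general hD P hP
end

section
/- Let D be a domain in ℂ and let M be a free maximal ideal of H(D). Then ki(M) := ⋂_{n=1}^∞ Mⁿ equals the set of all f ∈ M such that whenever d ∈ H(D) \ M divides f, say f = q·d with q ∈ H(D), one has o(q) = ∞. -/
set_option synthInstance.maxHeartbeats 400000
set_option maxHeartbeats 800000
/-!
`H(D)` is a Bézout domain in which `g` divides `f` exactly when the zeros of `g` are zeros of `f`
of at least the same order. So for `n ≥ 1` every `f ≠ 0` can be written as `r * pⁿ` with all zeros
of `r` of order below `n`. Since `o(r) < ∞`, the condition on `f` forces `pⁿ ∈ P`, so `p ∈ P`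
and `f ∈ Pⁿ`. Conversely, in a Bézout domain every element of `Pⁿ` is divisible by the `n`-th power
of an element of `P`, which is a nonunit and hence has a zero, and a cofactor outside the prime `P`
can be cancelled from membership in `Pⁿ`.

The function theory rests on prescribing orders of zeros (Weierstrass) and finitely many Taylor
coefficients at the zeros (Mittag-Leffler). Both are obtained without Runge's theorem: for each `a`
there is a `w` on `D` with `w = 1` only at `a` and `‖w‖ ≤ 1 / 2` on a compact set that grows as `a`
leaves compact sets, so convergence is forced by Taylor approximation of functions of `w` on the
disc.
-/

open Set Filter Topology Metric Polynomial

lemma mem_ki_iff {R : Type*} [CommRing R] {I : Ideal R} {x : R} :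
    x ∈ ki I ↔ ∀ n, 1 ≤ n → x ∈ I ^ n := by
  simp [ki, Submodule.mem_iInf]

section Ring

variable {R : Type*} [CommRing R] [IsBezout R]

lemma gcd_mem_ideal {I : Ideal R} {x y : R} (hx : x ∈ I) (hy : y ∈ I) :
    IsBezout.gcd x y ∈ I := by
  obtain ⟨a, b, hab⟩ := IsBezout.gcd_eq_sum x y
  exact hab ▸ I.add_mem (I.mul_mem_left a hx) (I.mul_mem_left b hy)

lemma exists_mem_pow_dvd_of_mem_pow {I : Ideal R} {n : ℕ} {x : R} (hx : x ∈ I ^ n) :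
    ∃ d ∈ I, d ^ n ∣ x := by
  induction n generalizing x with
  | zero => exact ⟨0, I.zero_mem, by simp⟩
  | succ n ih =>
    rw [pow_succ] at hx
    induction hx using Submodule.mul_induction_on' with
    | mem_mul_mem y hy z hz =>
      obtain ⟨d, hd, hdy⟩ := ih hy
      refine ⟨IsBezout.gcd d z, gcd_mem_ideal hd hz, ?_⟩
      rw [pow_succ]
      exact mul_dvd_mul ((pow_dvd_pow_of_dvd (IsBezout.gcd_dvd_left d z) n).trans hdy)
        (IsBezout.gcd_dvd_right d z)
    | add y _ z _ ihy ihz =>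
      obtain ⟨d, hd, hdy⟩ := ihy
      obtain ⟨e, he, hez⟩ := ihz
      exact ⟨IsBezout.gcd d e, gcd_mem_ideal hd he, dvd_add
        ((pow_dvd_pow_of_dvd (IsBezout.gcd_dvd_left d e) _).trans hdy)
        ((pow_dvd_pow_of_dvd (IsBezout.gcd_dvd_right d e) _).trans hez)⟩

lemma mem_pow_of_mul_mem_pow [IsDomain R] {P : Ideal R} (hP : P.IsPrime) {n : ℕ} {q d : R}
    (hqd : q * d ∈ P ^ n) (hd : d ∉ P) : q ∈ P ^ n := by
  classical
  obtain ⟨p, hp, hpn⟩ := exists_mem_pow_dvd_of_mem_pow hqd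
  let := IsBezout.toGCDDomain R
  obtain ⟨p', d', hp', hd', hunit⟩ := extract_gcd p d
  have hcoprime : IsCoprime p' d' := (gcd_isUnit_iff p' d').1 hunit
  set e := gcd p d
  have he : e ∉ P := fun he => hd (hd' ▸ P.mul_mem_right d' he)
  have he0 : e ≠ 0 := fun h => he (h ▸ P.zero_mem)
  have hp'P : p' ∈ P := (hP.mem_or_mem (hp' ▸ hp)).resolve_left he
  obtain _ | n := n
  · simp
  have hdvd : p' ^ (n + 1) ∣ q * d' := by
    rw [← mul_dvd_mul_iff_left he0]
    calc e * p' ^ (n + 1) ∣ e ^ (n + 1) * p' ^ (n + 1) :=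
          mul_dvd_mul_right (dvd_pow_self e n.succ_ne_zero) _
      _ = p ^ (n + 1) := by rw [hp', mul_pow]
      _ ∣ q * d := hpn
      _ = e * (q * d') := by rw [hd']; ring
  exact Ideal.mem_of_dvd _ (hcoprime.pow_left.dvd_of_dvd_mul_right hdvd)
    (Ideal.pow_mem_pow hp'P _)

end Ring

section PeakFunctions

variable {D : Set ℂ}

/-- The points of `D` of norm at most `R` and at distance at least `R⁻¹` from the complement of
`D`. If `D` is open, these compact sets exhaust it as `R` grows. -/
def exhaustion (D : Set ℂ) (R : ℝ) : Set ℂ := {z | ‖z‖ ≤ R ∧ ∀ b ∉ D, 1 ≤ R * dist z b}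

lemma exhaustion_subset {R : ℝ} : exhaustion D R ⊆ D := by
  intro z hz
  by_contra hzD
  exact absurd (hz.2 z hzD) (by simp)

lemma isCompact_exhaustion {R : ℝ} : IsCompact (exhaustion D R) := by
  refine (isCompact_closedBall (0 : ℂ) R).of_isClosed_subset ?_ fun z hz => by simpa using hz.1
  simp only [exhaustion, ofPred_and, ofPred_forall]
  exact (isClosed_le continuous_norm continuous_const).inter <| isClosed_iInter fun b =>
    isClosed_iInter fun _ => isClosed_le continuous_const (by fun_prop)

lemma exists_subset_exhaustion {D K : Set ℂ} (hD : IsOpen D) (hK : IsCompact K) (hKD : K ⊆ D) :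
    ∃ R, K ⊆ exhaustion D R := by
  obtain ⟨δ, hδ, hδK⟩ := hK.exists_cthickening_subset_open hD hKD
  obtain ⟨R, hR, hRK⟩ := hK.isBounded.exists_pos_norm_le
  refine ⟨max R δ⁻¹, fun z hz => ⟨(hRK z hz).trans (le_max_left _ _), ?_⟩⟩
  intro b hb
  have hδb : δ ≤ dist z b := by
    by_contra! h
    exact hb (hδK (mem_cthickening_of_dist_le b z δ K hz (dist_comm z b ▸ h.le)))
  calc (1 : ℝ) = δ⁻¹ * δ := (inv_mul_cancel₀ hδ.ne').symm
    _ ≤ max R δ⁻¹ * dist z b := by gcongr; exact le_max_right _ _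

/-- `w` is holomorphic on `D` and takes the value `1` exactly at `a`, with multiplicity one. Then
`1 - w` is a factor with a single simple zero at `a`, and `(1 - w)⁻¹` has a single simple pole. -/
structure AttainsOneOnce (D : Set ℂ) (a : ℂ) (w : ℂ → ℂ) : Prop where
  differentiableOn : DifferentiableOn ℂ w D
  order_one_sub : analyticOrderAt (fun z => 1 - w z) a = 1
  eq_of_apply_eq_one : ∀ z ∈ D, w z = 1 → z = a

lemma AttainsOneOnce.of_hasDerivAt {a w' : ℂ} {w : ℂ → ℂ} (hD : IsOpen D) (ha : a ∈ D)
    (hw : DifferentiableOn ℂ w D) (hwa : w a = 1) (hw' : HasDerivAt w w' a) (hw'0 : w' ≠ 0)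
    (h : ∀ z ∈ D, w z = 1 → z = a) : AttainsOneOnce D a w where
  differentiableOn := hw
  order_one_sub := by
    refine AnalyticAt.analyticOrderAt_eq_one_of_zero_deriv_ne_zero
      (((differentiableOn_const 1).sub hw).analyticAt (hD.mem_nhds ha)) (by simp [hwa]) ?_
    simpa [(hw'.const_sub 1).deriv] using hw'0
  eq_of_apply_eq_one := h

lemma exists_attainsOneOnce_norm_le_of_norm_lt (hD : IsOpen D) {a : ℂ} (ha : a ∈ D) :
    ∃ w, AttainsOneOnce D a w ∧ ∀ z, 2 * ‖z‖ < ‖a‖ → ‖w z‖ ≤ 1 / 2 := by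
  obtain rfl | ha0 := eq_or_ne a 0
  · refine ⟨fun z => 1 + z, .of_hasDerivAt hD ha (by fun_prop) (by simp)
      ((hasDerivAt_id _).const_add 1) one_ne_zero fun z _ hz => by simpa using hz, fun z hz => ?_⟩
    rw [norm_zero] at hz
    linarith [norm_nonneg z]
  · refine ⟨fun z => z / a, .of_hasDerivAt hD ha (by fun_prop) (div_self ha0)
      ((hasDerivAt_id a).div_const a) (one_div_ne_zero ha0)
      fun z _ hz => (div_eq_one_iff_eq ha0).1 hz, fun z hz => ?_⟩
    rw [norm_div, div_le_iff₀ (norm_pos_iff.2 ha0)]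
    linarith

lemma exists_attainsOneOnce_norm_le_of_dist_lt (hD : IsOpen D) {a b : ℂ} (ha : a ∈ D)
    (hb : b ∉ D) :
    ∃ w, AttainsOneOnce D a w ∧ ∀ z, 2 * dist a b < dist z b → ‖w z‖ ≤ 1 / 2 := by
  have hne : ∀ z ∈ D, z - b ≠ 0 := fun z hz h => hb (sub_eq_zero.1 h ▸ hz)
  have hderiv : HasDerivAt (fun z => (a - b) / (z - b)) (-(a - b)⁻¹) a := by
    refine ((hasDerivAt_const a (a - b)).fun_div ((hasDerivAt_id' a).sub_const b)
      (hne a ha)).congr_deriv ?_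
    field [hne a ha]
  refine ⟨fun z => (a - b) / (z - b), .of_hasDerivAt hD ha
    ((differentiableOn_const _).div (by fun_prop) hne) (div_self (hne a ha)) hderiv
    (neg_ne_zero.2 (inv_ne_zero (hne a ha))) fun z hz h => ?_, fun z hz => ?_⟩
  · simpa using ((div_eq_one_iff_eq (hne z hz)).1 h).symm
  · have hzb : 0 < dist z b := (mul_nonneg zero_le_two dist_nonneg).trans_lt hz
    rw [norm_div, ← dist_eq_norm, ← dist_eq_norm, div_le_iff₀ hzb]
    linarith

/-- Relative to `‖a‖⁻¹`, either `a` is far from the complement of `D`, and `z / a` is small where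
`‖z‖` is small, or `a` is close to it, and `(a - b) / (z - b)` is small away from a nearest point
`b` of the complement. -/
lemma exists_attainsOneOnce_norm_le (hD : IsOpen D) {a : ℂ} (ha : a ∈ D) :
    ∃ w, AttainsOneOnce D a w ∧ ∀ R, a ∉ exhaustion D (2 * R) → ∀ z ∈ exhaustion D R,
      ‖w z‖ ≤ 1 / 2 := by
  by_cases hfar : ∀ b ∉ D, 1 ≤ ‖a‖ * dist a b
  · obtain ⟨w, hw, hw_le⟩ := exists_attainsOneOnce_norm_le_of_norm_lt hD ha
    refine ⟨w, hw, fun R haR z hz => hw_le z ?_⟩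
    by_contra! hle
    have haR' : ‖a‖ ≤ 2 * R := hle.trans (by gcongr; exact hz.1)
    exact haR ⟨haR', fun b hb => (hfar b hb).trans (by gcongr)⟩
  · push Not at hfar
    obtain ⟨b₀, hb₀, hab₀⟩ := hfar
    obtain ⟨b, hb, hab⟩ := hD.isClosed_compl.exists_infDist_eq_dist ⟨b₀, hb₀⟩ a
    have hnearest : ∀ c ∉ D, dist a b ≤ dist a c := fun c hc => hab ▸ infDist_le_dist_of_mem hc
    obtain ⟨w, hw, hw_le⟩ := exists_attainsOneOnce_norm_le_of_dist_lt hD ha hb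
    refine ⟨w, hw, fun R haR z hz => hw_le z ?_⟩
    have hzb := hz.2 b hb
    have hR : 0 < R := pos_of_mul_pos_left (one_pos.trans_le hzb) dist_nonneg
    have hlt : 2 * R * dist a b < 1 := by
      by_contra! hle
      refine haR ⟨?_, fun c hc => hle.trans (by gcongr; exact hnearest c hc)⟩
      by_contra! hlt
      have : ‖a‖ * dist a b ≤ ‖a‖ * dist a b₀ := by gcongr; exact hnearest b₀ hb₀
      have : 2 * R * dist a b ≤ ‖a‖ * dist a b := by gcongr
      linarith
    nlinarith

end PeakFunctions

section Convergence

variable {ι : Type*} {U : Set ℂ} {f : ι → ℂ → ℂ} {u : ι → ℝ}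

lemma summable_norm_of_forall_compact (hu : Summable u)
    (hfu : ∀ K ⊆ U, IsCompact K → ∀ᶠ i in cofinite, ∀ z ∈ K, ‖f i z‖ ≤ u i) {z : ℂ}
    (hz : z ∈ U) : Summable fun i => ‖f i z‖ := by
  refine .of_norm_bounded_eventually hu ?_
  filter_upwards [hfu {z} (singleton_subset_iff.2 hz) isCompact_singleton] with i hi
  simpa using hi z rfl

lemma differentiableOn_tsum_of_forall_compact (hU : IsOpen U) (hu : Summable u)
    (hf : ∀ i, DifferentiableOn ℂ (f i) U)
    (hfu : ∀ K ⊆ U, IsCompact K → ∀ᶠ i in cofinite, ∀ z ∈ K, ‖f i z‖ ≤ u i) :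
    DifferentiableOn ℂ (fun z => ∑' i, f i z) U :=
  (SummableLocallyUniformlyOn.of_locally_bounded_eventually hU fun K hKU hK =>
    ⟨u, hu, hfu K hKU hK⟩).differentiableOn hU fun i _ hz =>
      (hf i).differentiableAt (hU.mem_nhds hz)

lemma differentiableOn_tprod_one_add_of_forall_compact (hU : IsOpen U) (hu : Summable u)
    (hf : ∀ i, DifferentiableOn ℂ (f i) U)
    (hfu : ∀ K ⊆ U, IsCompact K → ∀ᶠ i in cofinite, ∀ z ∈ K, ‖f i z‖ ≤ u i) :
    DifferentiableOn ℂ (fun z => ∏' i, (1 + f i z)) U := by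
  have hprod : HasProdLocallyUniformlyOn (fun i z => 1 + f i z) (fun z => ∏' i, (1 + f i z)) U :=
    hasProdLocallyUniformlyOn_of_forall_compact hU fun K hKU hK =>
      hu.hasProdUniformlyOn_one_add hK (hfu K hKU hK) fun i => (hf i).continuousOn.mono hKU
  rw [hasProdLocallyUniformlyOn_iff_tendstoLocallyUniformlyOn] at hprod
  exact hprod.differentiableOn (.of_forall fun s => .fun_finsetProd fun i _ => (hf i).const_add 1)
    hU

lemma eventually_cofinite_update [DecidableEq ι] {p : ι → (ℂ → ℂ) → Prop} {i₀ : ι} {g : ℂ → ℂ}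
    (h : ∀ᶠ i in cofinite, p i (f i)) : ∀ᶠ i in cofinite, p i (Function.update f i₀ g i) := by
  filter_upwards [h, eventually_cofinite_ne i₀] with i hi hne
  rwa [Function.update_of_ne hne]

lemma exists_tsum_eq_add_differentiableOn (hU : IsOpen U) (hu : Summable u) {i₀ : ι}
    (hf : ∀ i ≠ i₀, DifferentiableOn ℂ (f i) U)
    (hfu : ∀ K ⊆ U, IsCompact K → ∀ᶠ i in cofinite, ∀ z ∈ K, ‖f i z‖ ≤ u i) :
    ∃ H, DifferentiableOn ℂ H U ∧ ∀ z ∈ U, ∑' i, f i z = f i₀ z + H z := by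
  classical
  refine ⟨fun z => ∑' i, Function.update f i₀ 0 i z,
    differentiableOn_tsum_of_forall_compact hU hu
      ((Function.forall_update_iff f fun _ g => DifferentiableOn ℂ g U).2
        ⟨differentiableOn_const 0, hf⟩)
      fun K hKU hK => eventually_cofinite_update (p := fun i g => ∀ z ∈ K, ‖g z‖ ≤ u i)
        (hfu K hKU hK), fun z hz => ?_⟩
  have hsummable : Summable fun i => f i z := (summable_norm_of_forall_compact hu hfu hz).of_norm
  rw [hsummable.tsum_eq_add_tsum_ite i₀]
  simp only [Function.update_apply, ite_apply, Pi.zero_apply]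

lemma exists_tprod_one_add_eq_mul_differentiableOn (hU : IsOpen U) (hu : Summable u) (i₀ : ι)
    (hf : ∀ i ≠ i₀, DifferentiableOn ℂ (f i) U)
    (hfu : ∀ K ⊆ U, IsCompact K → ∀ᶠ i in cofinite, ∀ z ∈ K, ‖f i z‖ ≤ u i) :
    ∃ G, DifferentiableOn ℂ G U ∧ (∀ z ∈ U, (∀ i ≠ i₀, 1 + f i z ≠ 0) → G z ≠ 0) ∧
      ∀ z ∈ U, ∏' i, (1 + f i z) = (1 + f i₀ z) * G z := by
  classical
  set f' := Function.update f i₀ 0 with hf'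
  have hf'U : ∀ i, DifferentiableOn ℂ (f' i) U :=
    (Function.forall_update_iff f fun _ g => DifferentiableOn ℂ g U).2
      ⟨differentiableOn_const 0, hf⟩
  have hf'u : ∀ K ⊆ U, IsCompact K → ∀ᶠ i in cofinite, ∀ z ∈ K, ‖f' i z‖ ≤ u i :=
    fun K hKU hK => eventually_cofinite_update (p := fun i g => ∀ z ∈ K, ‖g z‖ ≤ u i)
      (hfu K hKU hK)
  refine ⟨fun z => ∏' i, (1 + f' i z),
    differentiableOn_tprod_one_add_of_forall_compact hU hu hf'U hf'u, fun z hz hne => ?_,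
    fun z hz => ?_⟩
  · refine tprod_one_add_ne_zero_of_summable (fun i => ?_)
      (summable_norm_of_forall_compact hu hf'u hz)
    obtain rfl | hi := eq_or_ne i i₀
    · simp [hf']
    · simpa [hf', Function.update_of_ne hi] using hne i hi
  · have hupdate : ∀ i, 1 + f' i z = Function.update (fun i => 1 + f i z) i₀ 1 i := by
      intro i
      obtain rfl | hi := eq_or_ne i i₀ <;> simp [*]
    have hmult := multipliable_one_add_of_summable (summable_norm_of_forall_compact hu hf'u hz)
    simp only [hupdate] at hmult
    rw [hmult.tprod_eq_mul_tprod_ite' i₀]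
    simp only [hupdate, Function.update_apply]

lemma analyticOrderAt_tprod_one_add (hU : IsOpen U) (hu : Summable u)
    (hf : ∀ i, DifferentiableOn ℂ (f i) U)
    (hfu : ∀ K ⊆ U, IsCompact K → ∀ᶠ i in cofinite, ∀ z ∈ K, ‖f i z‖ ≤ u i) {z₀ : ℂ}
    (hz₀ : z₀ ∈ U) {i₀ : ι} (hne : ∀ i ≠ i₀, 1 + f i z₀ ≠ 0) :
    analyticOrderAt (fun z => ∏' i, (1 + f i z)) z₀ =
      analyticOrderAt (fun z => 1 + f i₀ z) z₀ := by
  obtain ⟨G, hG, hG_ne, hfactor⟩ :=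
    exists_tprod_one_add_eq_mul_differentiableOn hU hu i₀ (fun i _ => hf i) hfu
  have hGan : AnalyticAt ℂ G z₀ := hG.analyticAt (hU.mem_nhds hz₀)
  have hfan : AnalyticAt ℂ (fun z => 1 + f i₀ z) z₀ :=
    ((hf i₀).const_add 1).analyticAt (hU.mem_nhds hz₀)
  calc analyticOrderAt (fun z => ∏' i, (1 + f i z)) z₀
      = analyticOrderAt ((fun z => 1 + f i₀ z) * G) z₀ :=
        analyticOrderAt_congr (eventually_of_mem (hU.mem_nhds hz₀) hfactor)
    _ = analyticOrderAt (fun z => 1 + f i₀ z) z₀ := by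
        rw [analyticOrderAt_mul hfan hGan,
          hGan.analyticOrderAt_eq_zero.2 (hG_ne z₀ hz₀ hne), add_zero]

end Convergence

section Approximation

lemma exists_differentiable_norm_sub_le {F : ℂ → ℂ} {c : ℂ} {r R : ℝ}
    (hF : DifferentiableOn ℂ F (ball c R)) (hrR : r < R) {ε : ℝ} (hε : 0 < ε) :
    ∃ g, Differentiable ℂ g ∧ ∀ w ∈ ball c r, ‖F w - g w‖ ≤ ε := by
  obtain hr | hr := le_or_gt r 0
  · exact ⟨0, differentiable_const 0, by simp [ball_eq_empty.2 hr]⟩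
  lift r to NNReal using hr.le
  obtain ⟨s, hrs, hsR⟩ := exists_between hrR
  lift s to NNReal using (hr.trans hrs).le
  have hseries := (hF.mono (closedBall_subset_ball hsR)).hasFPowerSeriesOnBall
    (by exact_mod_cast hr.trans hrs)
  obtain ⟨n, hn⟩ := (tendstoUniformlyOn_iff.1
    (hseries.tendstoUniformlyOn' (by exact_mod_cast hrs)) ε hε).exists
  refine ⟨_, ?_, fun w hw => dist_eq_norm (F w) _ ▸ (hn w hw).le⟩
  simp only [FormalMultilinearSeries.partialSum, FormalMultilinearSeries.apply_eq_pow_smul_coeff]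
  fun_prop

lemma exists_norm_one_sub_pow_mul_exp_sub_one_le (m : ℕ) {r ε : ℝ} (hr : r < 1) (hε : 0 < ε) :
    ∃ g, Differentiable ℂ g ∧
      ∀ w ∈ ball (0 : ℂ) r, ‖(1 - w) ^ m * Complex.exp (g w) - 1‖ ≤ ε := by
  have hslit : ∀ w ∈ ball (0 : ℂ) 1, 1 - w ∈ Complex.slitPlane := fun w hw => by
    simpa [sub_eq_add_neg] using Complex.mem_slitPlane_of_norm_lt_one (z := -w) (by simpa using hw)
  have hlog : DifferentiableOn ℂ (fun w => m * Complex.log (1 - w)) (ball 0 1) :=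
    (DifferentiableOn.clog (by fun_prop) hslit).const_mul _
  obtain ⟨g, hg, hgle⟩ := exists_differentiable_norm_sub_le hlog hr
    (lt_min one_pos (half_pos hε))
  refine ⟨-g, hg.neg, fun w hw => ?_⟩
  have hlogw := hgle w hw
  have hne := Complex.slitPlane_ne_zero (hslit w (ball_subset_ball hr.le hw))
  have hexp : (1 - w) ^ m * Complex.exp ((-g) w) = Complex.exp (m * Complex.log (1 - w) - g w) := by
    rw [Complex.exp_sub, Complex.exp_nat_mul, Complex.exp_log hne, Pi.neg_apply, Complex.exp_neg,
      div_eq_mul_inv]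
  calc ‖(1 - w) ^ m * Complex.exp ((-g) w) - 1‖
      ≤ 2 * ‖m * Complex.log (1 - w) - g w‖ :=
        hexp ▸ Complex.norm_exp_sub_one_le (hlogw.trans (min_le_left _ _))
    _ ≤ ε := by linarith [hlogw.trans (min_le_right _ _)]

end Approximation

section DiscreteSets

variable {D S : Set ℂ}

lemma eventually_mem_sdiff_of_compl_mem_codiscreteWithin (hD : IsOpen D)
    (hS : Sᶜ ∈ codiscreteWithin D) {z : ℂ} (hz : z ∈ D) : ∀ᶠ y in 𝓝[≠] z, y ∈ D \ S := by
  have hdisj := mem_codiscreteWithin.1 hS z hz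
  rw [disjoint_principal_right] at hdisj
  filter_upwards [hdisj, nhdsWithin_le_nhds (hD.mem_nhds hz)] with y hyS hyD
  exact ⟨hyD, fun hy => hyS ⟨hyD, fun h => h hy⟩⟩

lemma isOpen_sdiff_of_compl_mem_codiscreteWithin (hD : IsOpen D) (hS : Sᶜ ∈ codiscreteWithin D) :
    IsOpen (D \ S) := by
  refine isOpen_iff_mem_nhds.2 fun z hz => ?_
  rw [← insert_eq_of_mem hz]
  exact insert_mem_nhds_iff.2 (eventually_mem_sdiff_of_compl_mem_codiscreteWithin hD hS hz.1)

lemma countable_of_compl_mem_codiscreteWithin (hSD : S ⊆ D) (hS : Sᶜ ∈ codiscreteWithin D) :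
    S.Countable := by
  have := isDiscrete_of_codiscreteWithin hS
  rw [inter_eq_left.2 hSD] at this
  exact (HereditarilyLindelofSpace.isLindelof S).countable_of_isDiscrete this

lemma exists_attainsOneOnce_family (hD : IsOpen D) (hSD : S ⊆ D) (hS : Sᶜ ∈ codiscreteWithin D) :
    ∃ w : S → ℂ → ℂ, (∀ a : S, AttainsOneOnce D a (w a)) ∧
      ∀ K ⊆ D, IsCompact K → ∀ᶠ a in cofinite, ∀ z ∈ K, ‖w a z‖ ≤ 1 / 2 := by
  choose w hw hw_le using fun a : S => exists_attainsOneOnce_norm_le hD (hSD a.2)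
  refine ⟨w, hw, fun K hKD hK => ?_⟩
  obtain ⟨R, hKR⟩ := exists_subset_exhaustion hD hK hKD
  have hfin : (exhaustion D (2 * R) ∩ S).Finite := by
    simpa using isCompact_exhaustion.finite_sdiff_of_mem_codiscreteWithin
      (codiscreteWithin_mono exhaustion_subset hS)
  filter_upwards [(hfin.preimage Subtype.val_injective.injOn).compl_mem_cofinite] with a ha z hz
  exact hw_le a R (fun h => ha ⟨h, a.2⟩) z (hKR hz)

end DiscreteSets

section Weierstrass

lemma analyticOrderAt_pow_mul_cexp {f e : ℂ → ℂ} {z : ℂ} (hf : AnalyticAt ℂ f z)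
    (he : AnalyticAt ℂ e z) (m : ℕ) :
    analyticOrderAt (fun y => f y ^ m * Complex.exp (e y)) z = m • analyticOrderAt f z := by
  have hexp : analyticOrderAt (fun y => Complex.exp (e y)) z = 0 :=
    he.cexp.analyticOrderAt_eq_zero.2 (Complex.exp_ne_zero _)
  calc analyticOrderAt (f ^ m * fun y => Complex.exp (e y)) z
      = analyticOrderAt (f ^ m) z + analyticOrderAt (fun y => Complex.exp (e y)) z :=
        analyticOrderAt_mul (hf.pow m) he.cexp
    _ = m • analyticOrderAt f z := by rw [hexp, add_zero, analyticOrderAt_pow hf]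

theorem exists_analyticOrderAt_eq {D : Set ℂ} (hD : IsOpen D) {m : ℂ → ℕ}
    (hm : {z | m z = 0} ∈ codiscreteWithin D) :
    ∃ A : ℂ → ℂ, DifferentiableOn ℂ A D ∧ ∀ z ∈ D, analyticOrderAt A z = m z := by
  set S := {z ∈ D | m z ≠ 0}
  have hS : Sᶜ ∈ codiscreteWithin D := mem_of_superset hm fun z hz h => h.2 hz
  have hSD : S ⊆ D := sep_subset _ _
  obtain ⟨w, hw, hw_le⟩ := exists_attainsOneOnce_family hD hSD hS
  obtain ⟨u, hu_pos, c, hu, -⟩ :=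
    (countable_of_compl_mem_codiscreteWithin hSD hS).exists_pos_hasSum_le one_pos
  choose g hg hg_le using fun a : S => exists_norm_one_sub_pow_mul_exp_sub_one_le (m a)
    (r := 3 / 4) (by norm_num) (hu_pos a)
  set f : S → ℂ → ℂ := fun a z => (1 - w a z) ^ m a * Complex.exp (g a (w a z)) - 1 with hf
  have hfD : ∀ a, DifferentiableOn ℂ (f a) D := fun a =>
    ((((hw a).differentiableOn.const_sub 1).pow _).mul
      ((hg a).comp_differentiableOn (hw a).differentiableOn).cexp).sub_const 1
  have hfu : ∀ K ⊆ D, IsCompact K → ∀ᶠ a in cofinite, ∀ z ∈ K, ‖f a z‖ ≤ u a := by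
    intro K hKD hK
    filter_upwards [hw_le K hKD hK] with a ha z hz
    exact hg_le a _ (by simpa using (ha z hz).trans_lt (by norm_num))
  have hne : ∀ a : S, ∀ z ∈ D, z ≠ a → 1 + f a z ≠ 0 := fun a z hz hza => by
    have hwz : 1 - w a z ≠ 0 := sub_ne_zero.2 fun h => hza ((hw a).eq_of_apply_eq_one z hz h.symm)
    simpa only [hf, add_sub_cancel] using mul_ne_zero (pow_ne_zero _ hwz) (Complex.exp_ne_zero _)
  refine ⟨fun z => ∏' a, (1 + f a z),
    differentiableOn_tprod_one_add_of_forall_compact hD hu.summable hfD hfu, fun z hz => ?_⟩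
  by_cases hzS : z ∈ S
  · lift z to S using hzS
    have hwz : AnalyticAt ℂ (w z) z := (hw z).differentiableOn.analyticAt (hD.mem_nhds hz)
    rw [analyticOrderAt_tprod_one_add hD hu.summable hfD hfu hz (i₀ := z)
      fun a ha => hne a z hz fun h => ha (Subtype.ext h.symm)]
    simp only [hf, add_sub_cancel]
    rw [analyticOrderAt_pow_mul_cexp (f := fun y => 1 - w z y) (analyticAt_const.sub hwz)
      (((hg z).analyticAt _).fun_comp hwz), (hw z).order_one_sub, nsmul_one]
  · rw [not_not.1 fun h => hzS ⟨hz, h⟩, Nat.cast_zero, analyticOrderAt_eq_zero]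
    exact .inr <| tprod_one_add_ne_zero_of_summable (fun a => hne a z hz fun h => hzS (h ▸ a.2))
      (summable_norm_of_forall_compact hu.summable hfu hz)

end Weierstrass

section MittagLeffler

lemma exists_meromorphicOrderAt_sub_const_pos {ψ : ℂ → ℂ} {a : ℂ} (hψ : MeromorphicAt ψ a)
    (h : 0 ≤ meromorphicOrderAt ψ a) : ∃ c : ℂ, 0 < meromorphicOrderAt (ψ - fun _ => c) a := by
  obtain ⟨c, hc⟩ := tendsto_nhds_of_meromorphicOrderAt_nonneg hψ h
  refine ⟨c, (tendsto_zero_iff_meromorphicOrderAt_pos (hψ.sub (.const c a))).1 ?_⟩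
  have := hc.sub_const c
  rwa [sub_self] at this

lemma exists_meromorphicOrderAt_sub_ge {φ t : ℂ → ℂ} {a : ℂ}
    (hφ : MeromorphicAt φ a) (ht : MeromorphicAt t a) (hta : meromorphicOrderAt t a = 1)
    {n : ℕ} (hn : (-(n + 1 : ℕ) : ℤ) ≤ meromorphicOrderAt φ a) :
    ∃ c : ℂ, (-n : ℤ) ≤ meromorphicOrderAt (fun z => φ z - c * (t z)⁻¹ ^ (n + 1)) a := by
  have hpow_order : meromorphicOrderAt (t ^ (n + 1)) a = ((n + 1 : ℕ) : ℤ) := by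
    rw [meromorphicOrderAt_pow ht, hta, mul_one]
    rfl
  have hψ : MeromorphicAt (φ * t ^ (n + 1)) a := hφ.mul (ht.pow _)
  obtain ⟨c, hc⟩ := exists_meromorphicOrderAt_sub_const_pos hψ <| by
    rw [meromorphicOrderAt_mul hφ (ht.pow _), hpow_order]
    cases h : meromorphicOrderAt φ a with
    | top => simp
    | coe k =>
      rw [h, WithTop.coe_le_coe] at hn
      rw [← WithTop.coe_add, ← WithTop.coe_zero, WithTop.coe_le_coe]
      omega
  refine ⟨c, ?_⟩
  have hne : ∀ᶠ z in 𝓝[≠] a, t z ≠ 0 :=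
    (meromorphicOrderAt_ne_top_iff_eventually_ne_zero ht).1 (by simp [hta])
  have hcongr : (fun z => φ z - c * (t z)⁻¹ ^ (n + 1)) =ᶠ[𝓝[≠] a]
      (φ * t ^ (n + 1) - fun _ => c) * (t ^ (n + 1))⁻¹ := by
    filter_upwards [hne] with z hz
    have := pow_ne_zero (n + 1) hz
    simp only [Pi.mul_apply, Pi.sub_apply, Pi.pow_apply, Pi.inv_apply, inv_pow]
    field_simp
  rw [meromorphicOrderAt_congr hcongr,
    meromorphicOrderAt_mul (hψ.sub (.const c a)) (ht.pow _).inv, meromorphicOrderAt_inv,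
    hpow_order]
  cases h : meromorphicOrderAt (φ * t ^ (n + 1) - fun _ => c) a with
  | top => simp
  | coe k =>
    rw [h, ← WithTop.coe_zero, WithTop.coe_lt_coe] at hc
    rw [← WithTop.LinearOrderedAddCommGroup.coe_neg, ← WithTop.coe_add, WithTop.coe_le_coe]
    omega

theorem exists_polynomial_meromorphicOrderAt_sub_nonneg {φ t : ℂ → ℂ} {a : ℂ}
    (hφ : MeromorphicAt φ a) (ht : MeromorphicAt t a) (hta : meromorphicOrderAt t a = 1) :
    ∃ p : ℂ[X], 0 ≤ meromorphicOrderAt (fun z => φ z - p.eval (t z)⁻¹) a := by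
  obtain ⟨n, hn⟩ : ∃ n : ℕ, (-n : ℤ) ≤ meromorphicOrderAt φ a := by
    cases meromorphicOrderAt φ a with
    | top => simp
    | coe k => exact ⟨k.natAbs, WithTop.coe_le_coe.2 (by omega)⟩
  induction n generalizing φ with
  | zero => exact ⟨0, by simpa using hn⟩
  | succ n ih =>
    obtain ⟨c, hc⟩ := exists_meromorphicOrderAt_sub_ge hφ ht hta hn
    obtain ⟨p, hp⟩ := ih (hφ.sub ((MeromorphicAt.const c a).mul (ht.inv.pow _))) hc
    exact ⟨p + C c * X ^ (n + 1), by simpa [sub_sub, add_comm] using hp⟩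

lemma exists_principal_part_norm_le {D : Set ℂ} (hD : IsOpen D) {a : ℂ} (ha : a ∈ D) {w : ℂ → ℂ}
    (hw : AttainsOneOnce D a w) {φ : ℂ → ℂ} (hφ : MeromorphicAt φ a) {ε : ℝ} (hε : 0 < ε) :
    ∃ T : ℂ → ℂ, DifferentiableOn ℂ T (D \ {a}) ∧ MeromorphicAt T a ∧
      0 ≤ meromorphicOrderAt (T - φ) a ∧ ∀ z, ‖w z‖ ≤ 1 / 2 → ‖T z‖ ≤ ε := by
  have hwa : AnalyticAt ℂ w a := hw.differentiableOn.analyticAt (hD.mem_nhds ha)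
  have ht : AnalyticAt ℂ (fun z => 1 - w z) a := analyticAt_const.sub hwa
  have hta : meromorphicOrderAt (fun z => 1 - w z) a = 1 := by
    rw [ht.meromorphicOrderAt_eq, hw.order_one_sub]
    rfl
  obtain ⟨p, hp⟩ := exists_polynomial_meromorphicOrderAt_sub_nonneg hφ ht.meromorphicAt hta
  have hF : DifferentiableOn ℂ (fun ξ : ℂ => p.eval (1 - ξ)⁻¹) (ball 0 1) := by
    refine p.differentiable.comp_differentiableOn (.inv (by fun_prop) fun ξ hξ h => ?_)
    simp [← sub_eq_zero.1 h] at hξ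
  obtain ⟨g, hg, hg_le⟩ := exists_differentiable_norm_sub_le hF (by norm_num : (3 / 4 : ℝ) < 1) hε
  have hgw : AnalyticAt ℂ (g ∘ w) a := (hg.analyticAt _).comp hwa
  have hpm : MeromorphicAt (fun z => p.eval (1 - w z)⁻¹) a := by
    simp only [eval_eq_sum_range]
    fun_prop
  refine ⟨fun z => p.eval (1 - w z)⁻¹ - g (w z), ?_, hpm.sub hgw.meromorphicAt, ?_, fun z hz =>
    hg_le _ (by simpa using hz.trans_lt (by norm_num))⟩
  · have hwD : DifferentiableOn ℂ w (D \ {a}) := hw.differentiableOn.mono sdiff_subset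
    refine (p.differentiable.comp_differentiableOn ((hwD.const_sub 1).inv fun z hz h => ?_)).sub
      (hg.comp_differentiableOn hwD)
    exact hz.2 (hw.eq_of_apply_eq_one z hz.1 (sub_eq_zero.1 h).symm)
  · have hsplit : (fun z => p.eval (1 - w z)⁻¹ - g (w z)) - φ =
        -((fun z => φ z - p.eval (1 - w z)⁻¹) + g ∘ w) := by
      ext z
      simp only [Pi.sub_apply, Pi.neg_apply, Pi.add_apply, Function.comp_apply]
      ring
    rw [hsplit, ← meromorphicOrderAt_neg]
    exact (le_min hp hgw.meromorphicOrderAt_nonneg).trans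
      (meromorphicOrderAt_add (hφ.sub hpm) hgw.meromorphicAt)

theorem exists_meromorphicOrderAt_sub_nonneg {D S : Set ℂ} (hD : IsOpen D) (hSD : S ⊆ D)
    (hS : Sᶜ ∈ codiscreteWithin D) {φ : ℂ → ℂ → ℂ} (hφ : ∀ a ∈ S, MeromorphicAt (φ a) a) :
    ∃ h : ℂ → ℂ, DifferentiableOn ℂ h (D \ S) ∧
      ∀ a ∈ S, MeromorphicAt h a ∧ 0 ≤ meromorphicOrderAt (h - φ a) a := by
  obtain ⟨w, hw, hw_le⟩ := exists_attainsOneOnce_family hD hSD hS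
  obtain ⟨u, hu_pos, c, hu, -⟩ :=
    (countable_of_compl_mem_codiscreteWithin hSD hS).exists_pos_hasSum_le one_pos
  choose T hT hT_mero hT_order hT_le using fun a : S =>
    exists_principal_part_norm_le hD (hSD a.2) (hw a) (hφ a a.2) (hu_pos a)
  have hTu : ∀ K ⊆ D, IsCompact K → ∀ᶠ a in cofinite, ∀ z ∈ K, ‖T a z‖ ≤ u a :=
    fun K hKD hK => (hw_le K hKD hK).mono fun a ha z hz => hT_le a z (ha z hz)
  refine ⟨fun z => ∑' a, T a z, differentiableOn_tsum_of_forall_compact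
    (isOpen_sdiff_of_compl_mem_codiscreteWithin hD hS) hu.summable
    (fun a => (hT a).mono (sdiff_subset_sdiff_right (singleton_subset_iff.2 a.2)))
    fun K hK => hTu K (hK.trans sdiff_subset), fun a ha => ?_⟩
  lift a to S using ha
  have hU : IsOpen (D \ (S \ {(a : ℂ)})) := isOpen_sdiff_of_compl_mem_codiscreteWithin hD
    (mem_of_superset hS (compl_subset_compl.2 sdiff_subset))
  have haU : (a : ℂ) ∈ D \ (S \ {(a : ℂ)}) := ⟨hSD a.2, fun h => h.2 rfl⟩
  obtain ⟨H, hH, hsum⟩ := exists_tsum_eq_add_differentiableOn hU hu.summable (i₀ := a)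
    (fun b hb => (hT b).mono fun z hz => ⟨hz.1, fun h => hz.2 ⟨h ▸ b.2, fun h' =>
      hb (Subtype.ext (h.symm.trans h'))⟩⟩) fun K hK => hTu K (hK.trans sdiff_subset)
  have hHa : AnalyticAt ℂ H a := hH.analyticAt (hU.mem_nhds haU)
  have hsum' : (fun z => ∑' b, T b z) =ᶠ[𝓝[≠] ↑a] T a + H :=
    nhdsWithin_le_nhds (eventually_of_mem (hU.mem_nhds haU) hsum)
  refine ⟨((hT_mero a).add hHa.meromorphicAt).congr hsum'.symm, ?_⟩
  rw [meromorphicOrderAt_congr (hsum'.sub (.refl _ _)), add_sub_right_comm]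
  exact (le_min (hT_order a) hHa.meromorphicOrderAt_nonneg).trans
    (meromorphicOrderAt_add ((hT_mero a).sub (hφ a a.2)) hHa.meromorphicAt)

end MittagLeffler

section Division

variable {D : Set ℂ}

lemma meromorphicOrderAt_le_meromorphicOrderAt_iff {f g : ℂ → ℂ} {z : ℂ} (hf : AnalyticAt ℂ f z)
    (hg : AnalyticAt ℂ g z) :
    meromorphicOrderAt f z ≤ meromorphicOrderAt g z ↔
      analyticOrderAt f z ≤ analyticOrderAt g z := by
  rw [hf.meromorphicOrderAt_eq, hg.meromorphicOrderAt_eq]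
  cases analyticOrderAt f z <;> cases analyticOrderAt g z <;> simp

lemma exists_differentiableOn_eventuallyEq_nhdsNE {F : ℂ → ℂ} (hF : MeromorphicOn F D)
    (hF_order : ∀ z ∈ D, 0 ≤ meromorphicOrderAt F z) :
    ∃ v : ℂ → ℂ, DifferentiableOn ℂ v D ∧ ∀ z ∈ D, v =ᶠ[𝓝[≠] z] F := by
  refine ⟨toMeromorphicNFOn F D, fun z hz => ?_, fun z hz =>
    hF.toMeromorphicNFOn_eq_self_on_nhdsNE hz⟩
  have hNF : MeromorphicNFAt (toMeromorphicNFOn F D) z := meromorphicNFOn_toMeromorphicNFOn F D hz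
  exact (hNF.meromorphicOrderAt_nonneg_iff_analyticAt.1
    (by rw [meromorphicOrderAt_toMeromorphicNFOn hF hz]; exact hF_order z hz)).differentiableAt
      |>.differentiableWithinAt

theorem exists_eqOn_mul_of_analyticOrderAt_le (hD : IsOpen D) {F G : ℂ → ℂ}
    (hF : DifferentiableOn ℂ F D) (hG : DifferentiableOn ℂ G D)
    (hG_ne : {z | G z = 0}ᶜ ∈ codiscreteWithin D)
    (h : ∀ z ∈ D, analyticOrderAt G z ≤ analyticOrderAt F z) :
    ∃ Q : ℂ → ℂ, DifferentiableOn ℂ Q D ∧ EqOn F (Q * G) D := by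
  have hFan : AnalyticOnNhd ℂ F D := hF.analyticOnNhd hD
  have hGan : AnalyticOnNhd ℂ G D := hG.analyticOnNhd hD
  have hmero : MeromorphicOn (F / G) D := hFan.meromorphicOn.div hGan.meromorphicOn
  have hG_nhdsNE : ∀ z ∈ D, ∀ᶠ y in 𝓝[≠] z, G y ≠ 0 := fun z hz =>
    (eventually_mem_sdiff_of_compl_mem_codiscreteWithin hD hG_ne hz).mono fun y hy => hy.2
  have horder : ∀ z ∈ D, 0 ≤ meromorphicOrderAt (F / G) z := fun z hz => by
    have hle := (meromorphicOrderAt_le_meromorphicOrderAt_iff (hGan z hz) (hFan z hz)).2 (h z hz)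
    have htop := (meromorphicOrderAt_ne_top_iff_eventually_ne_zero (hGan z hz).meromorphicAt).2
      (hG_nhdsNE z hz)
    rw [meromorphicOrderAt_div (hFan z hz).meromorphicAt (hGan z hz).meromorphicAt,
      ← LinearOrderedAddCommGroupWithTop.sub_self_eq_zero_of_ne_top htop]
    exact (LinearOrderedAddCommGroupWithTop.sub_le_sub_iff_left_of_ne_top htop).2 hle
  obtain ⟨Q, hQ, hQ_eq⟩ := exists_differentiableOn_eventuallyEq_nhdsNE hmero horder
  refine ⟨Q, hQ, fun z hz => ?_⟩
  have hQan : AnalyticAt ℂ Q z := hQ.analyticAt (hD.mem_nhds hz)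
  refine ((hFan z hz).continuousAt.eventuallyEq_nhds_iff_eventuallyEq_nhdsNE
    (hQan.mul (hGan z hz)).continuousAt).1 ?_ |>.eq_of_nhds
  filter_upwards [hQ_eq z hz, hG_nhdsNE z hz] with y hy hGy
  rw [Pi.mul_apply, hy, Pi.div_apply, div_mul_cancel₀ _ hGy]

lemma meromorphicOrderAt_le_mul_sub {f g h : ℂ → ℂ} {a : ℂ} (hf : MeromorphicAt f a)
    (hg : MeromorphicAt g a) (hh : MeromorphicAt h a) (hf_ne : ∀ᶠ z in 𝓝[≠] a, f z ≠ 0)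
    (hfgh : 0 ≤ meromorphicOrderAt (h - g / f) a) :
    meromorphicOrderAt f a ≤ meromorphicOrderAt (f * h - g) a := by
  have hcongr : f * h - g =ᶠ[𝓝[≠] a] f * (h - g / f) := by
    filter_upwards [hf_ne] with y hy
    simp only [Pi.sub_apply, Pi.mul_apply, Pi.div_apply]
    field_simp
  rw [meromorphicOrderAt_congr hcongr, meromorphicOrderAt_mul hf (hh.sub (hg.div hf))]
  exact le_add_of_nonneg_right hfgh

theorem exists_analyticOrderAt_le_sub (hD : IsOpen D) {f : ℂ → ℂ} (hf : DifferentiableOn ℂ f D)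
    (hf_ne : {z | f z = 0}ᶜ ∈ codiscreteWithin D) {g : ℂ → ℂ → ℂ}
    (hg : ∀ a ∈ D, f a = 0 → AnalyticAt ℂ (g a) a) :
    ∃ v : ℂ → ℂ, DifferentiableOn ℂ v D ∧
      ∀ a ∈ D, f a = 0 → analyticOrderAt f a ≤ analyticOrderAt (v - g a) a := by
  have hfan : AnalyticOnNhd ℂ f D := hf.analyticOnNhd hD
  set S := {z ∈ D | f z = 0}
  have hS : Sᶜ ∈ codiscreteWithin D := mem_of_superset hf_ne fun z hz h => hz h.2
  obtain ⟨h, hh, hhS⟩ := exists_meromorphicOrderAt_sub_nonneg hD (sep_subset _ _) hS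
    (φ := fun a => g a / f) fun a ha => (hg a ha.1 ha.2).meromorphicAt.div
      (hfan a ha.1).meromorphicAt
  have hfh : ∀ z ∈ D, z ∉ S → AnalyticAt ℂ (f * h) z := fun z hz hzS => (hfan z hz).mul
    (hh.analyticAt ((isOpen_sdiff_of_compl_mem_codiscreteWithin hD hS).mem_nhds ⟨hz, hzS⟩))
  have hmero : MeromorphicOn (f * h) D := fun z hz => by
    by_cases hzS : z ∈ S
    · exact (hfan z hz).meromorphicAt.mul (hhS z hzS).1
    · exact (hfh z hz hzS).meromorphicAt
  have hle : ∀ a ∈ S, meromorphicOrderAt f a ≤ meromorphicOrderAt (f * h - g a) a := fun a ha =>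
    meromorphicOrderAt_le_mul_sub (hfan a ha.1).meromorphicAt (hg a ha.1 ha.2).meromorphicAt
      (hhS a ha).1
      ((eventually_mem_sdiff_of_compl_mem_codiscreteWithin hD hf_ne ha.1).mono fun y hy => hy.2)
      (hhS a ha).2
  have hnonneg : ∀ z ∈ D, 0 ≤ meromorphicOrderAt (f * h) z := fun z hz => by
    by_cases hzS : z ∈ S
    · have hga := hg z hz hzS.2
      rw [← sub_add_cancel (f * h) (g z)]
      exact (le_min ((hfan z hz).meromorphicOrderAt_nonneg.trans (hle z hzS))
        hga.meromorphicOrderAt_nonneg).trans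
          (meromorphicOrderAt_add ((hmero z hz).sub hga.meromorphicAt) hga.meromorphicAt)
    · exact (hfh z hz hzS).meromorphicOrderAt_nonneg
  obtain ⟨v, hv, hv_eq⟩ := exists_differentiableOn_eventuallyEq_nhdsNE hmero hnonneg
  refine ⟨v, hv, fun a ha hfa => ?_⟩
  rw [← meromorphicOrderAt_le_meromorphicOrderAt_iff (hfan a ha)
    ((hv.analyticAt (hD.mem_nhds ha)).sub (hg a ha hfa)),
    meromorphicOrderAt_congr ((hv_eq a ha).sub (.refl _ _))]
  exact hle a ⟨ha, hfa⟩

end Division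

namespace Hol

variable {D : Set ℂ}

/-- A function on the whole plane that is holomorphic on `D` and restricts to `f`; its values
outside `D` are arbitrary. -/
noncomputable def extension (f : Hol D) : ℂ → ℂ := f.2.choose

lemma differentiableOn_extension (f : Hol D) : DifferentiableOn ℂ (extension f) D :=
  f.2.choose_spec.1

lemma extension_apply (f : Hol D) (z : D) : extension f z = (f : D → ℂ) z :=
  f.2.choose_spec.2 z

/-- The element of `H(D)` given by a function on the plane that is holomorphic on `D`. -/
def ofDifferentiableOn (F : ℂ → ℂ) (hF : DifferentiableOn ℂ F D) : Hol D :=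
  ⟨fun z => F z, F, hF, fun _ => rfl⟩

/-- The order of vanishing of `f` at `z`: it is `0` where `f z ≠ 0` and `⊤` where `f` vanishes
in a neighbourhood of `z`. -/
noncomputable def order (f : Hol D) (z : D) : ℕ∞ := analyticOrderAt (extension f) (z : ℂ)

section Order

lemma analyticAt_extension (hD : IsOpen D) (f : Hol D) (z : D) :
    AnalyticAt ℂ (extension f) (z : ℂ) :=
  (differentiableOn_extension f).analyticAt (hD.mem_nhds z.2)

lemma order_eq_analyticOrderAt (hD : IsOpen D) {f : Hol D} {F : ℂ → ℂ}
    (hF : ∀ z : D, (f : D → ℂ) z = F z) (z : D) : order f z = analyticOrderAt F (z : ℂ) := by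
  refine analyticOrderAt_congr ?_
  filter_upwards [hD.mem_nhds z.2] with y hy
  rw [extension_apply f ⟨y, hy⟩, hF]

lemma order_mul (hD : IsOpen D) (f g : Hol D) (z : D) :
    order (f * g) z = order f z + order g z := by
  rw [order_eq_analyticOrderAt hD (F := extension f * extension g) (by simp [extension_apply]),
    analyticOrderAt_mul (analyticAt_extension hD f z) (analyticAt_extension hD g z)]
  rfl

lemma order_pow (hD : IsOpen D) (f : Hol D) (n : ℕ) (z : D) :
    order (f ^ n) z = n • order f z := by
  rw [order_eq_analyticOrderAt hD (F := extension f ^ n) (by simp [extension_apply]),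
    analyticOrderAt_pow (analyticAt_extension hD f z)]
  rfl

lemma order_zero (hD : IsOpen D) (z : D) : order (0 : Hol D) z = ⊤ := by
  rw [order_eq_analyticOrderAt hD (F := 0) (by simp), analyticOrderAt_eq_top]
  simp

lemma order_eq_zero_iff (hD : IsOpen D) {f : Hol D} {z : D} :
    order f z = 0 ↔ (f : D → ℂ) z ≠ 0 := by
  rw [order, (analyticAt_extension hD f z).analyticOrderAt_eq_zero, extension_apply]

lemma compl_zeros_extension_mem_codiscreteWithin (hD : IsOpen D) (hDc : IsPreconnected D)
    {f : Hol D} (hf : f ≠ 0) : {z | extension f z = 0}ᶜ ∈ codiscreteWithin D := by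
  refine (((differentiableOn_extension f).analyticOnNhd hD)
    |>.eqOn_zero_or_eventually_ne_zero_of_preconnected hDc).resolve_left fun h => hf ?_
  ext z
  simpa [extension_apply] using h z.2

lemma order_ne_top (hD : IsOpen D) (hDc : IsPreconnected D) {f : Hol D} (hf : f ≠ 0) (z : D) :
    order f z ≠ ⊤ := by
  rw [order, Ne, analyticOrderAt_eq_top]
  intro h
  have hne := eventually_mem_sdiff_of_compl_mem_codiscreteWithin hD
    (compl_zeros_extension_mem_codiscreteWithin hD hDc hf) z.2
  obtain ⟨y, hy, hy'⟩ := (hne.and (h.filter_mono nhdsWithin_le_nhds)).exists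
  exact hy.2 hy'

lemma noZeroDivisors (hD : IsOpen D) (hDc : IsPreconnected D) : NoZeroDivisors (Hol D) where
  eq_zero_or_eq_zero_of_mul_eq_zero {f g} hfg := by
    by_contra! ⟨hf, hg⟩
    obtain ⟨z, -⟩ : ∃ z, (f : D → ℂ) z ≠ 0 := by
      contrapose! hf
      exact Subtype.ext (funext hf)
    have htop := order_mul hD f g z
    rw [hfg, order_zero hD, eq_comm, ENat.add_eq_top] at htop
    exact htop.elim (order_ne_top hD hDc hf z) (order_ne_top hD hDc hg z)

end Order

section Divisibility

variable (hD : IsOpen D) (hDc : IsPreconnected D)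
include hD hDc

theorem dvd_iff_order_le {f g : Hol D} : g ∣ f ↔ ∀ z, order g z ≤ order f z := by
  refine ⟨fun ⟨q, hq⟩ z => by simp [hq, order_mul hD], fun h => ?_⟩
  obtain rfl | hg := eq_or_ne g 0
  · suffices f = 0 from this ▸ dvd_rfl
    by_contra hf
    refine hf (Subtype.ext (funext fun z => (order_ne_top hD hDc hf z ?_).elim))
    simpa [order_zero hD] using h z
  obtain ⟨Q, hQ, hQ_eq⟩ := exists_eqOn_mul_of_analyticOrderAt_le hD (differentiableOn_extension f)
    (differentiableOn_extension g) (compl_zeros_extension_mem_codiscreteWithin hD hDc hg)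
    fun z hz => h ⟨z, hz⟩
  refine ⟨ofDifferentiableOn Q hQ, ?_⟩
  ext z
  have := hQ_eq z.2
  rw [Pi.mul_apply, extension_apply, extension_apply, mul_comm] at this
  exact this

lemma isUnit_iff_forall_ne_zero {f : Hol D} : IsUnit f ↔ ∀ z, (f : D → ℂ) z ≠ 0 := by
  have hone : ∀ z, order (1 : Hol D) z = 0 := fun z => (order_eq_zero_iff hD).2 (by simp)
  simp only [isUnit_iff_dvd_one, dvd_iff_order_le hD hDc, hone, nonpos_iff_eq_zero,
    order_eq_zero_iff hD]

theorem ordGE_iff_le_order {f : Hol D} {ζ : D} {n : ℕ} : ordGE f ζ n ↔ n ≤ order f ζ := by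
  set l : Hol D := ofDifferentiableOn (fun z => z - ζ) (by fun_prop)
  have hl_self : order l ζ = 1 := by
    rw [order_eq_analyticOrderAt hD (F := fun z => z - ζ) fun z => rfl]
    simp
  have hl_ne : ∀ z ≠ ζ, order l z = 0 := fun z hz =>
    (order_eq_zero_iff hD).2 (sub_ne_zero.2 fun h => hz (Subtype.ext h))
  calc ordGE f ζ n ↔ l ^ n ∣ f := exists_congr fun g => by
        rw [Subtype.ext_iff, funext_iff]
        rfl
    _ ↔ n ≤ order f ζ := by
        simp only [dvd_iff_order_le hD hDc, order_pow hD]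
        refine ⟨fun h => by simpa [hl_self] using h ζ, fun h z => ?_⟩
        obtain rfl | hz := eq_or_ne z ζ
        · simpa [hl_self] using h
        · simp [hl_ne z hz]

theorem exists_order_eq {f : Hol D} (hf : f ≠ 0) {n : D → ℕ} (hn : ∀ z, n z ≤ order f z) :
    ∃ g : Hol D, ∀ z, order g z = n z := by
  have hm : {z | Function.extend (Subtype.val : D → ℂ) n 0 z = 0} ∈ codiscreteWithin D := by
    filter_upwards [compl_zeros_extension_mem_codiscreteWithin hD hDc hf] with z hz
    by_cases hzD : z ∈ D
    · lift z to D using hzD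
      rw [mem_compl_iff, mem_ofPred_eq, extension_apply, ← ne_eq, ← order_eq_zero_iff hD] at hz
      have := hn z
      rw [Subtype.val_injective.extend_apply]
      simpa [hz] using this
    · exact Function.extend_apply' _ _ _ (by simpa using hzD)
  obtain ⟨A, hA, hA_order⟩ := exists_analyticOrderAt_eq hD hm
  refine ⟨ofDifferentiableOn A hA, fun z => ?_⟩
  rw [order_eq_analyticOrderAt hD (F := A) fun z => rfl, hA_order z z.2,
    Subtype.val_injective.extend_apply]

theorem exists_eq_mul_pow_order_lt {f : Hol D} (hf : f ≠ 0) {n : ℕ} (hn : n ≠ 0) :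
    ∃ r p : Hol D, f = r * p ^ n ∧ ∀ z, order r z < n := by
  have hord : ∀ z, ((order f z).toNat : ℕ∞) = order f z := fun z =>
    ENat.natCast_toNat (order_ne_top hD hDc hf z)
  obtain ⟨p, hp⟩ := exists_order_eq hD hDc hf (n := fun z => (order f z).toNat / n) fun z => by
    rw [← hord]
    exact_mod_cast Nat.div_le_self _ _
  obtain ⟨r, hr⟩ : p ^ n ∣ f := (dvd_iff_order_le hD hDc).2 fun z => by
    rw [order_pow hD, hp, ← hord, nsmul_eq_mul]
    exact_mod_cast Nat.mul_div_le _ _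
  refine ⟨r, p, hr.trans (mul_comm _ _), fun z => ?_⟩
  have hadd := order_mul hD (p ^ n) r z
  rw [← hr, order_pow hD, hp, nsmul_eq_mul, ← hord z] at hadd
  cases hrz : order r z with
  | top => simp [hrz] at hadd
  | coe k =>
    rw [hrz, ENat.toNat_natCast] at hadd
    norm_cast at hadd ⊢
    have := Nat.div_add_mod (order f z).toNat n
    have := Nat.mod_lt (order f z).toNat (Nat.pos_of_ne_zero hn)
    omega

theorem isCoprime_of_forall_ne_zero {f g : Hol D}
    (hfg : ∀ z, (f : D → ℂ) z = 0 → (g : D → ℂ) z ≠ 0) : IsCoprime f g := by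
  obtain rfl | hf := eq_or_ne f 0
  · exact isCoprime_zero_left.2 ((isUnit_iff_forall_ne_zero hD hDc).2 fun z => hfg z rfl)
  have hg_ne : ∀ z : D, (f : D → ℂ) z = 0 → extension g z ≠ 0 := fun z hz => by
    rw [extension_apply]
    exact hfg z hz
  obtain ⟨v, hv, hv_order⟩ := exists_analyticOrderAt_le_sub hD (differentiableOn_extension f)
    (compl_zeros_extension_mem_codiscreteWithin hD hDc hf) (g := fun _ => (extension g)⁻¹)
    fun a ha hfa => (analyticAt_extension hD g ⟨a, ha⟩).inv
      (hg_ne ⟨a, ha⟩ (by rwa [← extension_apply]))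
  set V := ofDifferentiableOn v hv
  obtain ⟨u, hu⟩ : f ∣ 1 - V * g := (dvd_iff_order_le hD hDc).2 fun z => by
    obtain hfz | hfz := ne_or_eq ((f : D → ℂ) z) 0
    · rw [(order_eq_zero_iff hD).2 hfz]
      exact zero_le
    have hg : AnalyticAt ℂ (extension g) z := analyticAt_extension hD g z
    have hcongr : (fun y => 1 - v y * extension g y) =ᶠ[𝓝 (z : ℂ)]
        (v - (extension g)⁻¹) * -extension g := by
      filter_upwards [hg.continuousAt.eventually_ne (hg_ne z hfz)] with y hy
      simp only [Pi.mul_apply, Pi.sub_apply, Pi.inv_apply, Pi.neg_apply]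
      field_simp
      ring
    rw [order_eq_analyticOrderAt hD (f := 1 - V * g) (F := fun y => 1 - v y * extension g y)
      (by simp [V, ofDifferentiableOn, extension_apply]), analyticOrderAt_congr hcongr,
      analyticOrderAt_mul ((hv.analyticAt (hD.mem_nhds z.2)).sub (hg.inv (hg_ne z hfz))) hg.neg]
    exact le_add_right (hv_order z z.2 (by rwa [extension_apply]))
  exact ⟨u, V, by linear_combination -hu⟩

theorem isBezout : IsBezout (Hol D) := by
  refine IsBezout.iff_span_pair_isPrincipal.2 fun f g => ?_
  obtain rfl | hf := eq_or_ne f 0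
  · exact ⟨g, by simp [Ideal.span_insert]⟩
  obtain ⟨d, hd⟩ := exists_order_eq hD hDc hf (n := fun z => (min (order f z) (order g z)).toNat)
    fun z => (ENat.natCast_toNat_le_self _).trans (min_le_left _ _)
  have hd_order : ∀ z, order d z = min (order f z) (order g z) := fun z => by
    rw [hd, ENat.natCast_toNat (ne_top_of_le_ne_top (order_ne_top hD hDc hf z) (min_le_left _ _))]
  obtain ⟨a, rfl⟩ : d ∣ f := (dvd_iff_order_le hD hDc).2 fun z => hd_order z ▸ min_le_left _ _
  obtain ⟨b, rfl⟩ : d ∣ g := (dvd_iff_order_le hD hDc).2 fun z => hd_order z ▸ min_le_right _ _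
  have hd0 : d ≠ 0 := left_ne_zero_of_mul hf
  obtain ⟨u, v, huv⟩ : IsCoprime a b := isCoprime_of_forall_ne_zero hD hDc fun z ha hb => by
    have hmin := hd_order z
    rw [order_mul hD, order_mul hD, min_add_add_left, eq_comm] at hmin
    have hmin0 : min (order a z) (order b z) = 0 :=
      ENat.add_right_injective_of_ne_top (order_ne_top hD hDc hd0 z) (hmin.trans (add_zero _).symm)
    obtain h | h := min_eq_iff.1 hmin0
    · exact (order_eq_zero_iff hD).1 h.1 ha
    · exact (order_eq_zero_iff hD).1 h.1 hb
  refine ⟨d, le_antisymm (Ideal.span_le.2 ?_) ?_⟩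
  · rintro _ (rfl | rfl)
    · exact Ideal.mem_span_singleton.2 (dvd_mul_right d a)
    · exact Ideal.mem_span_singleton.2 (dvd_mul_right d b)
  · refine (Ideal.span_singleton_le_iff_mem _).2 (Ideal.mem_span_pair.2 ⟨u, v, ?_⟩)
    linear_combination d * huv

end Divisibility

end Hol

section KrullIntersection

variable {D : Set ℂ} (hD : IsOpen D) (hDc : IsPreconnected D) {P : Ideal (Hol D)}
include hD hDc

lemma exists_le_order_of_mem_pow (hP : P ≠ ⊤) {n : ℕ} {q : Hol D} (hq : q ∈ P ^ n) :
    ∃ ζ, n ≤ Hol.order q ζ := by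
  have := Hol.isBezout hD hDc
  obtain ⟨p, hp, hpq⟩ := exists_mem_pow_dvd_of_mem_pow hq
  obtain ⟨ζ, hζ⟩ : ∃ ζ, (p : D → ℂ) ζ = 0 := by
    contrapose! hP
    exact P.eq_top_of_isUnit_mem hp ((Hol.isUnit_iff_forall_ne_zero hD hDc).2 hP)
  have hone : 1 ≤ Hol.order p ζ := by
    rw [Order.one_le_iff_ne_zero, Ne, Hol.order_eq_zero_iff hD, not_not]
    exact hζ
  refine ⟨ζ, ?_⟩
  calc (n : ℕ∞) = n • 1 := (nsmul_one n).symm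
    _ ≤ n • Hol.order p ζ := nsmul_le_nsmul_right hone n
    _ = Hol.order (p ^ n) ζ := (Hol.order_pow hD p n ζ).symm
    _ ≤ Hol.order q ζ := (Hol.dvd_iff_order_le hD hDc).1 hpq ζ

lemma oInf_of_mem_ki (hP : P ≠ ⊤) {q : Hol D} (hq : q ∈ ki P) : oInf q := by
  refine .inr fun n => ?_
  obtain ⟨ζ, hζ⟩ := exists_le_order_of_mem_pow hD hDc hP (mem_ki_iff.1 hq (n + 1) (by omega))
  refine ⟨ζ, ?_, (Hol.ordGE_iff_le_order hD hDc).2 (le_trans (by simp) hζ)⟩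
  by_contra hne
  simp [(Hol.order_eq_zero_iff hD).2 hne] at hζ

lemma not_oInf_of_order_lt {r : Hol D} (hr : r ≠ 0) {n : ℕ} (hrn : ∀ z, Hol.order r z < n) :
    ¬ oInf r := by
  rintro (h | h)
  · exact hr h
  · obtain ⟨ζ, -, hζ⟩ := h n
    exact (hrn ζ).not_ge ((Hol.ordGE_iff_le_order hD hDc).1 hζ)

end KrullIntersection

theorem ki_eq_henriksen_general {D : Set ℂ} (hD : IsOpen D) (hDc : IsPreconnected D)
    (P : Ideal (Hol D)) (hP : P.IsPrime) (f : Hol D) :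
    f ∈ ki P ↔ f ∈ P ∧ ∀ d q : Hol D, d ∉ P → f = q * d → oInf q := by
  have := Hol.isBezout hD hDc
  have := Hol.noZeroDivisors hD hDc
  have : Nontrivial (Hol D) := (Submodule.nontrivial_iff _).1 ⟨P, ⊤, hP.ne_top⟩
  have := NoZeroDivisors.to_isDomain (Hol D)
  refine ⟨fun hf => ⟨by simpa using mem_ki_iff.1 hf 1 le_rfl, ?_⟩, fun ⟨_, hf⟩ => ?_⟩
  · rintro d q hd rfl
    exact oInf_of_mem_ki hD hDc hP.ne_top
      (mem_ki_iff.2 fun n hn => mem_pow_of_mul_mem_pow hP (mem_ki_iff.1 hf n hn) hd)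
  · obtain rfl | hf0 := eq_or_ne f 0
    · exact (ki P).zero_mem
    refine mem_ki_iff.2 fun n hn => ?_
    obtain ⟨r, p, rfl, hr⟩ := Hol.exists_eq_mul_pow_order_lt hD hDc hf0 (n := n) (by omega)
    have hp : p ∈ P := by
      by_contra hp
      exact not_oInf_of_order_lt hD hDc (left_ne_zero_of_mul hf0) hr
        (hf (p ^ n) r (fun h => hp (hP.mem_of_pow_mem n h)) rfl)
    exact (P ^ n).mul_mem_left r (Ideal.pow_mem_pow hp n)

/-- (Henriksen) Let `D` be a domain in `ℂ` and `M` a free maximal ideal of `H(D)`. Then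
`ki(M) = ⋂_{n=1}^∞ Mⁿ` consists exactly of those `f ∈ M` such that whenever
`d ∈ H(D) \ M` divides `f`, say `f = q·d`, one has `o(q) = ∞`. -/
theorem ki_eq_henriksen {D : Set ℂ} (hD : IsOpen D) (hDconn : IsConnected D)
    (M : Ideal (Hol D)) (hM : M.IsMaximal)
    (hfree : (⋂ g ∈ M, ZD g) = (∅ : Set D)) :
    ∀ f : Hol D,
      f ∈ ki M ↔ (f ∈ M ∧ ∀ d q : Hol D, d ∉ M → f = q * d → oInf q) :=
  ki_eq_henriksen_general hD hDconn.isPreconnected M hM.isPrime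
end
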